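/- Let n ≥ 2, 1 ≤ k ≤ n-1, σ ≥ 0, and let ω_k be the largest zero of T_n^{(k+1)}. Then for every x ∈ [0, ω_k], m_k(x,σ) ≤ (3/(2k+1))·T_{n-1}^{(k)}(1) + (2/(2k+1))·(2(k+1)/(n+k))·T_n^{(k)}(1)·(σ/σ_n). -/

import Mathlib

open Polynomial Set

/-- `k`-th derivative of the Chebyshev polynomial `T_m`, evaluated at `x`. -/
noncomputable def chebDeriv (m : ℤ) (k : ℕ) (x : ℝ) : ℝ :=
  (derivative^[k] (Polynomial.Chebyshev.T ℝ m)).eval x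

/-- `σ_n = 2^(n-1) n! = T_n^{(n)}(1)`. -/
noncomputable def sigmaN (n : ℕ) : ℝ := 2 ^ (n - 1) * (n.factorial : ℝ)

/-- `f` is `n` times differentiable on the set `s`. -/
def NTimesDiffOn (n : ℕ) (f : ℝ → ℝ) (s : Set ℝ) : Prop :=
  ∀ i < n, DifferentiableOn ℝ (iteratedDerivWithin i f s) s

/-- The class `W^n_∞(σ)` on `[-1,1]`. -/
def memW (n : ℕ) (σ : ℝ) (f : ℝ → ℝ) : Prop :=
  NTimesDiffOn n f (Icc (-1:ℝ) 1) ∧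
  (∀ x ∈ Icc (-1:ℝ) 1, |f x| ≤ 1) ∧
  (∀ x ∈ Icc (-1:ℝ) 1, |iteratedDerivWithin n f (Icc (-1:ℝ) 1) x| ≤ σ)

/-- `m_k(x,σ) = sup { |f^{(k)}(x)| : f ∈ W^n_∞(σ) }`. -/
noncomputable def mval (n k : ℕ) (x σ : ℝ) : ℝ :=
  sSup {y | ∃ f : ℝ → ℝ, memW n σ f ∧
    y = |iteratedDerivWithin k f (Icc (-1:ℝ) 1) x|}

/-- `m_k^*(x,σ) = sup { |f^{(k)}(x)| : f ∈ W^n_∞(σ), f^{(k+1)}(x) = 0 }`. -/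
noncomputable def mstar (n k : ℕ) (x σ : ℝ) : ℝ :=
  sSup {y | ∃ f : ℝ → ℝ, memW n σ f ∧
    iteratedDerivWithin (k+1) f (Icc (-1:ℝ) 1) x = 0 ∧
    y = |iteratedDerivWithin k f (Icc (-1:ℝ) 1) x|}

/-- `μ_k(x₀)`: best constant in the pointwise Markov inequality. -/
noncomputable def muk (n k : ℕ) (x : ℝ) : ℝ :=
  sSup {y | ∃ p : Polynomial ℝ, p.natDegree ≤ n ∧
    (∀ t ∈ Icc (-1:ℝ) 1, |p.eval t| ≤ 1) ∧
    y = |(derivative^[k] p).eval x|}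

/-- `μ_k^*(x₀)`: best constant in the pointwise Schur-type inequality. -/
noncomputable def mukStar (n k : ℕ) (x : ℝ) : ℝ :=
  sSup {y | ∃ p : Polynomial ℝ, p.natDegree ≤ n ∧
    (∀ t ∈ Icc (-1:ℝ) 1, |p.eval t| ≤ 1) ∧
    (derivative^[k+1] p).eval x = 0 ∧
    y = |(derivative^[k] p).eval x|}



/-- A chain of functions, each the derivative of the previous one. -/
def DChain (n : ℕ) (F : ℕ → ℝ → ℝ) : Prop :=
  ∀ i < n, ContinuousOn (F i) (Icc (-1:ℝ) 1) ∧
    ∀ x ∈ Ioo (-1:ℝ) 1, HasDerivAt (F i) (F (i+1) x) x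

/-- A chain in the class `W`. -/
def WChain (n : ℕ) (σ : ℝ) (F : ℕ → ℝ → ℝ) : Prop :=
  DChain n F ∧ (∀ x ∈ Icc (-1:ℝ) 1, |F 0 x| ≤ 1) ∧ (∀ x ∈ Icc (-1:ℝ) 1, |F n x| ≤ σ)

lemma WChain_of_memW {n : ℕ} {σ : ℝ} {f : ℝ → ℝ} (h : memW n σ f) :
    WChain n σ (fun i => iteratedDerivWithin i f (Icc (-1:ℝ) 1)) := by
  obtain ⟨h1, h2, h3⟩ := h
  refine ⟨fun i hi => ⟨(h1 i hi).continuousOn, fun x hx => ?_⟩, ?_, h3⟩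
  · have hx' := Ioo_subset_Icc_self hx
    have := (h1 i hi x hx').hasDerivWithinAt
    rw [← iteratedDerivWithin_succ] at this
    exact this.hasDerivAt (Icc_mem_nhds hx.1 hx.2)
  · intro x hx
    simpa [iteratedDerivWithin_zero] using h2 x hx

lemma DChain.poly (n : ℕ) (p : ℝ[X]) : DChain n (fun i t => (derivative^[i] p).eval t) := by
  intro i _
  refine ⟨(Polynomial.continuous _).continuousOn, fun x _ => ?_⟩
  simp only [Function.iterate_succ_apply']
  exact Polynomial.hasDerivAt _ _

lemma DChain.add {n : ℕ} {F G : ℕ → ℝ → ℝ} (hF : DChain n F) (hG : DChain n G) :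
    DChain n (fun i t => F i t + G i t) := fun i hi =>
  ⟨(hF i hi).1.add (hG i hi).1, fun x hx => ((hF i hi).2 x hx).add ((hG i hi).2 x hx)⟩

lemma DChain.smul {n : ℕ} {F : ℕ → ℝ → ℝ} (c : ℝ) (hF : DChain n F) :
    DChain n (fun i t => c * F i t) := fun i hi =>
  ⟨continuousOn_const.mul (hF i hi).1, fun x hx => ((hF i hi).2 x hx).const_mul c⟩

lemma DChain.shift {n : ℕ} {F : ℕ → ℝ → ℝ} (j m : ℕ) (hj : j + m ≤ n) (hF : DChain n F) :
    DChain m (fun i => F (j + i)) := fun i hi => hF (j + i) (by omega)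

/-- affine substitution -/
lemma WChain.comp_affine {n : ℕ} {σ : ℝ} {F : ℕ → ℝ → ℝ} (h : WChain n σ F) (s c : ℝ)
    (hs : s ≠ 0) (h1 : |s| + |c| ≤ 1) : WChain n σ (fun i t => s ^ i * F i (s * t + c)) := by
  have hmap : ∀ t ∈ Icc (-1:ℝ) 1, s * t + c ∈ Icc (-1:ℝ) 1 := by
    intro t ht
    have : |s * t + c| ≤ 1 := by
      refine (abs_add_le _ _).trans ?_
      rw [abs_mul]
      have : |t| ≤ 1 := abs_le.2 ht
      nlinarith [abs_nonneg s]
    exact abs_le.1 this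
  have hmap' : ∀ t ∈ Ioo (-1:ℝ) 1, s * t + c ∈ Ioo (-1:ℝ) 1 := by
    intro t ht
    have : |s * t + c| < 1 := by
      refine (abs_add_le _ _).trans_lt ?_
      rw [abs_mul]
      have : |t| < 1 := abs_lt.2 ht
      nlinarith [abs_pos.2 hs]
    exact abs_lt.1 this
  obtain ⟨h0, h2, h3⟩ := h
  refine ⟨fun i hi => ⟨?_, ?_⟩, ?_, ?_⟩
  · refine continuousOn_const.mul ((h0 i hi).1.comp ?_ hmap)
    fun_prop
  · intro x hx
    have hd : HasDerivAt (fun t => s * t + c) s x := by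
      simpa using ((hasDerivAt_id x).const_mul s).add_const c
    have := (((h0 i hi).2 _ (hmap' x hx)).comp x hd).const_mul (s ^ i)
    refine this.congr_deriv ?_
    simp only [pow_succ]; ring
  · intro x hx; simpa using h2 _ (hmap x hx)
  · intro x hx
    rw [abs_mul, abs_pow]
    have hs1 : |s| ^ n ≤ 1 := pow_le_one₀ (abs_nonneg _) (by linarith [abs_nonneg c])
    have := h3 _ (hmap x hx)
    nlinarith [abs_nonneg (F n (s * x + c)), pow_nonneg (abs_nonneg s) n]

/-- Rolle with gap information. -/
lemma rolle_gaps {G G' : ℝ → ℝ} (hc : ContinuousOn G (Icc (-1:ℝ) 1))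
    (hd : ∀ x ∈ Ioo (-1:ℝ) 1, HasDerivAt G (G' x) x) (s : Finset ℝ)
    (hs : ∀ t ∈ s, t ∈ Icc (-1:ℝ) 1 ∧ G t = 0) :
    ∃ u : Finset ℝ, s.card ≤ u.card + 1 ∧ (∀ t ∈ u, t ∈ Ioo (-1:ℝ) 1 ∧ G' t = 0) ∧
      (∀ t ∈ u, t ∉ s) ∧
      (∀ t ∈ u, ∃ e ∈ s, ∃ e' ∈ s, e < t ∧ t < e' ∧ ∀ t' ∈ u, t' ≠ t → t' ∉ Ioo e e') := by
  classical
  induction s using Finset.induction_on_max with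
  | empty => exact ⟨∅, by simp⟩
  | insert a s hmax ih =>
    obtain ⟨u, hu1, hu2, hu3, hu4⟩ := ih (fun t ht => hs t (Finset.mem_insert_of_mem ht))
    by_cases hne : s.Nonempty
    · obtain ⟨b, hb, hbm⟩ := s.exists_max_image id hne
      simp only [id] at hbm
      have hba := hmax b hb
      have hb' := hs b (Finset.mem_insert_of_mem hb)
      have ha' := hs a (Finset.mem_insert_self _ _)
      obtain ⟨c, hc1, hc2⟩ := exists_hasDerivAt_eq_zero (f := G) (f' := G') hba
        (hc.mono (Icc_subset_Icc hb'.1.1 ha'.1.2)) (by rw [hb'.2, ha'.2])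
        (fun x hx => hd x ⟨hb'.1.1.trans_lt hx.1, hx.2.trans_le ha'.1.2⟩)
      have hub : ∀ t ∈ u, t < b := fun t ht => by
        obtain ⟨e, he, e', he', h1, h2, -⟩ := hu4 t ht
        exact h2.trans_le (hbm e' he')
      have hcu : c ∉ u := fun h => absurd (hub c h) (not_lt.2 hc1.1.le)
      have has : a ∉ s := fun h => lt_irrefl _ (hmax a h)
      refine ⟨insert c u, ?_, ?_, ?_, ?_⟩
      · rw [Finset.card_insert_of_notMem hcu, Finset.card_insert_of_notMem has]; omega
      · intro t ht
        rcases Finset.mem_insert.1 ht with rfl | ht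
        · exact ⟨⟨hb'.1.1.trans_lt hc1.1, hc1.2.trans_le ha'.1.2⟩, hc2⟩
        · exact hu2 t ht
      · intro t ht h
        rcases Finset.mem_insert.1 ht with rfl | ht
        · rcases Finset.mem_insert.1 h with h | h
          · exact absurd hc1.2 (by rw [h]; exact lt_irrefl _)
          · exact absurd hc1.1 (not_lt.2 (hbm _ h))
        · rcases Finset.mem_insert.1 h with h | h
          · have := hub t ht; linarith
          · exact hu3 t ht h
      · intro t ht
        rcases Finset.mem_insert.1 ht with rfl | ht
        · refine ⟨b, Finset.mem_insert_of_mem hb, a, Finset.mem_insert_self _ _, hc1.1, hc1.2, ?_⟩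
          intro t' ht' hne' hm
          rcases Finset.mem_insert.1 ht' with h | h
          · exact hne' h
          · exact absurd hm.1 (not_lt.2 (hub _ h).le)
        · obtain ⟨e, he, e', he', h1, h2, h3⟩ := hu4 t ht
          refine ⟨e, Finset.mem_insert_of_mem he, e', Finset.mem_insert_of_mem he', h1, h2, ?_⟩
          intro t' ht' hne' hm
          rcases Finset.mem_insert.1 ht' with rfl | h
          · have := hbm e' he'; have := hm.2; have := hc1.1; linarith
          · exact h3 t' h hne' hm
    · rw [Finset.not_nonempty_iff_eq_empty] at hne
      subst hne
      exact ⟨∅, by simp⟩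

/-- iterated Rolle -/
lemma rolle_iter (m : ℕ) : ∀ {F : ℕ → ℝ → ℝ}, DChain m F → ∀ s : Finset ℝ, m + 1 ≤ s.card →
    (∀ t ∈ s, t ∈ Ioo (-1:ℝ) 1 ∧ F 0 t = 0) → ∃ ξ ∈ Ioo (-1:ℝ) 1, F m ξ = 0 := by
  induction m with
  | zero =>
    intro F _ s hs h
    obtain ⟨t, ht⟩ := Finset.card_pos.1 (by omega : 0 < s.card)
    exact ⟨t, (h t ht).1, (h t ht).2⟩
  | succ m ih =>
    intro F hF s hs h
    obtain ⟨u, hu1, hu2, -, -⟩ := rolle_gaps (hF 0 (by omega)).1 (hF 0 (by omega)).2 s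
      (fun t ht => ⟨Ioo_subset_Icc_self (h t ht).1, (h t ht).2⟩)
    have := ih (F := fun i => F (1 + i)) (hF.shift 1 m (by omega)) u (by omega)
      (fun t ht => by simpa using hu2 t ht)
    simpa [add_comm] using this

lemma rolle_iter_closed (m : ℕ) : ∀ {F : ℕ → ℝ → ℝ}, DChain m F → ∀ (s : Finset ℝ),
    (∀ t ∈ s, t ∈ Icc (-1:ℝ) 1 ∧ F 0 t = 0) →
    ∃ u : Finset ℝ, s.card ≤ u.card + m ∧ ∀ t ∈ u, t ∈ Icc (-1:ℝ) 1 ∧ F m t = 0 := by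
  induction m with
  | zero => intro F _ s h; exact ⟨s, by simp, h⟩
  | succ m ih =>
    intro F hF s h
    obtain ⟨u, hu1, hu2, -, -⟩ := rolle_gaps (hF 0 (by omega)).1 (hF 0 (by omega)).2 s h
    obtain ⟨v, hv1, hv2⟩ := ih (F := fun i => F (1 + i)) (hF.shift 1 m (by omega)) u
      (fun t ht => ⟨Ioo_subset_Icc_self (hu2 t ht).1, by simpa using (hu2 t ht).2⟩)
    exact ⟨v, by omega, by simpa [add_comm] using hv2⟩

/-- key dichotomy: no sign change with nonzero second derivative -/
lemma gap_second {φ ψ ψ1 : ℝ → ℝ} {a b x c : ℝ} (hax : a < x) (hxb : x < b)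
    (hφc : ContinuousOn φ (Icc a b))
    (hφ : ∀ t ∈ Ioo a b, HasDerivAt φ (ψ t) t) (hψ : ∀ t ∈ Ioo a b, HasDerivAt ψ (ψ1 t) t)
    (hψ1 : HasDerivAt ψ1 c x) (h0 : ψ x = 0) (h1 : ψ1 x = 0) (ha : φ a = 0) (hb : φ b = 0)
    (hno : ∀ t ∈ Ioo a b, t ≠ x → ψ t ≠ 0) : ¬ 0 < c := by
  intro hcpos
  have hψcont : ContinuousOn ψ (Ioo a b) := fun t ht => (hψ t ht).continuousAt.continuousWithinAt
  have hev : deriv ψ =ᶠ[nhds x] ψ1 := by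
    filter_upwards [Ioo_mem_nhds hax hxb] with t ht using (hψ t ht).deriv
  have hmin : IsLocalMin ψ x := by
    apply isLocalMin_of_deriv_deriv_pos
    · rw [hev.deriv_eq, hψ1.deriv]; exact hcpos
    · rw [hev.eq_of_nhds, h1]
    · exact (hψ x ⟨hax, hxb⟩).continuousAt
  have hmin' : ∀ᶠ t in nhds x, 0 ≤ ψ t ∧ t ∈ Ioo a b := by
    filter_upwards [hmin, Ioo_mem_nhds hax hxb] with t ht ht'
    rw [h0] at ht
    exact ⟨ht, ht'⟩
  obtain ⟨l, r, hx, hlr⟩ := mem_nhds_iff_exists_Ioo_subset.1 hmin'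
  -- positive on the right
  have hpos : ∀ t ∈ Ioo a b, 0 ≤ ψ t := by
    intro t ht
    by_contra hneg
    push Not at hneg
    rcases lt_trichotomy t x with h | h | h
    · -- left
      obtain ⟨m, hm1, hm2⟩ := exists_between (max_lt h hx.1)
      have hm3 := hlr ⟨(le_max_right _ _).trans_lt hm1, hm2.trans hx.2⟩
      have htm : t < m := (le_max_left _ _).trans_lt hm1
      have := intermediate_value_Icc htm.le (hψcont.mono (fun y hy => ⟨ht.1.trans_le hy.1, hy.2.trans_lt (hm2.trans hxb)⟩))
      obtain ⟨z, hz, hz0⟩ := this ⟨hneg.le, hm3.1⟩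
      exact hno z ⟨ht.1.trans_le hz.1, hz.2.trans_lt (hm2.trans hxb)⟩ (hz.2.trans_lt hm2).ne hz0
    · rw [h, h0] at hneg; exact lt_irrefl _ hneg
    · obtain ⟨m, hm1, hm2⟩ := exists_between (lt_min h hx.2)
      have hm3 := hlr ⟨hx.1.trans hm1, hm2.trans_le (min_le_right _ _)⟩
      have htm : m < t := hm2.trans_le (min_le_left _ _)
      have := intermediate_value_Icc' htm.le (hψcont.mono (fun y hy => ⟨hax.trans (hm1.trans_le hy.1), hy.2.trans_lt ht.2⟩))
      obtain ⟨z, hz, hz0⟩ := this ⟨hneg.le, hm3.1⟩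
      exact hno z ⟨hax.trans (hm1.trans_le hz.1), hz.2.trans_lt ht.2⟩ (hm1.trans_le hz.1).ne' hz0
  have hmono : MonotoneOn φ (Icc a b) := by
    apply monotoneOn_of_deriv_nonneg (convex_Icc a b) hφc
    · rw [interior_Icc]; exact fun t ht => (hφ t ht).differentiableAt.differentiableWithinAt
    · rw [interior_Icc]; intro t ht; rw [(hφ t ht).deriv]; exact hpos t ht
  -- φ = 0 on the gap
  have hzero : ∀ t ∈ Icc a b, φ t = 0 := by
    intro t ht
    have hab := (hax.trans hxb).le
    have h1 := hmono (left_mem_Icc.2 hab) ht ht.1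
    have h2 := hmono ht (right_mem_Icc.2 hab) ht.2
    linarith
  obtain ⟨t, ht1, ht2⟩ := exists_between hxb
  refine hno t ⟨hax.trans ht1, ht2⟩ ht1.ne' ?_
  have hloc : φ =ᶠ[nhds t] fun _ => 0 := by
    filter_upwards [Ioo_mem_nhds (hax.trans ht1) ht2] with y hy
    exact hzero y (Ioo_subset_Icc_self hy)
  have := (hφ t ⟨hax.trans ht1, ht2⟩).deriv
  rw [hloc.deriv_eq] at this
  simpa using this.symm

/-- The Rolle lemma, reduced form. -/
lemma rolle_core {m : ℕ} (hm : 2 ≤ m) {F : ℕ → ℝ → ℝ} (hF : DChain (m+1) F) (s : Finset ℝ)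
    (hcard : m ≤ s.card) (hs : ∀ t ∈ s, t ∈ Icc (-1:ℝ) 1 ∧ F 0 t = 0) {x : ℝ}
    (hx : x ∈ Ioo (-1:ℝ) 1) (h1 : F 1 x = 0) (h2 : F 2 x = 0) :
    ∃ ξ ∈ Ioo (-1:ℝ) 1, F (m+1) ξ = 0 := by
  classical
  obtain ⟨u, hu1, hu2, hu3, hu4⟩ := rolle_gaps (hF 0 (by omega)).1 (hF 0 (by omega)).2 s hs
  -- from m zeros of F 1 including x conclude
  have fin1 : ∀ v : Finset ℝ, m ≤ v.card → x ∈ v → (∀ t ∈ v, t ∈ Ioo (-1:ℝ) 1 ∧ F 1 t = 0) →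
      ∃ ξ ∈ Ioo (-1:ℝ) 1, F (m+1) ξ = 0 := by
    intro v hv hxv hvz
    obtain ⟨w, hw1, hw2, hw3, -⟩ := rolle_gaps (hF 1 (by omega)).1 (hF 1 (by omega)).2 v
      (fun t ht => ⟨Ioo_subset_Icc_self (hvz t ht).1, (hvz t ht).2⟩)
    have hxw : x ∉ w := fun h => hw3 x h hxv
    have := rolle_iter (m-1) (F := fun i => F (2 + i)) (hF.shift 2 (m-1) (by omega)) (insert x w)
      (by rw [Finset.card_insert_of_notMem hxw]; omega)
      (fun t ht => by
        rcases Finset.mem_insert.1 ht with rfl | ht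
        · exact ⟨hx, by simpa using h2⟩
        · simpa using hw2 t ht)
    have e : 2 + (m - 1) = m + 1 := by omega
    simpa [e] using this
  by_cases hxu : x ∈ u
  swap
  · refine fin1 (insert x u) (by rw [Finset.card_insert_of_notMem hxu]; omega)
      (Finset.mem_insert_self _ _) ?_
    intro t ht
    rcases Finset.mem_insert.1 ht with rfl | ht
    · exact ⟨hx, h1⟩
    · exact hu2 t ht
  obtain ⟨a, ha, b, hb, hax, hxb, hgap⟩ := hu4 x hxu
  have ha' := hs a ha
  have hb' := hs b hb
  have hsub : ∀ t ∈ Ioo a b, t ∈ Ioo (-1:ℝ) 1 := fun t ht => ⟨ha'.1.1.trans_lt ht.1, ht.2.trans_le hb'.1.2⟩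
  by_cases hother : ∃ t ∈ Ioo a b, t ≠ x ∧ F 1 t = 0
  · obtain ⟨c, hc, hcx, hc0⟩ := hother
    have hcu : c ∉ u := fun h => hgap c h hcx hc
    refine fin1 (insert c u) (by rw [Finset.card_insert_of_notMem hcu]; omega)
      (Finset.mem_insert_of_mem hxu) ?_
    intro t ht
    rcases Finset.mem_insert.1 ht with rfl | ht
    · exact ⟨hsub _ hc, hc0⟩
    · exact hu2 t ht
  push Not at hother
  have h3 : F 3 x = 0 := by
    have A := gap_second hax hxb ((hF 0 (by omega)).1.mono (Icc_subset_Icc ha'.1.1 hb'.1.2))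
      (fun t ht => (hF 0 (by omega)).2 t (hsub t ht)) (fun t ht => (hF 1 (by omega)).2 t (hsub t ht))
      ((hF 2 (by omega)).2 x hx) h1 h2 ha'.2 hb'.2 hother
    have hF' := hF.smul (-1)
    have B := gap_second hax hxb ((hF' 0 (by omega)).1.mono (Icc_subset_Icc ha'.1.1 hb'.1.2))
      (fun t ht => (hF' 0 (by omega)).2 t (hsub t ht)) (fun t ht => (hF' 1 (by omega)).2 t (hsub t ht))
      ((hF' 2 (by omega)).2 x hx) (by simpa using h1) (by simpa using h2) (by simpa using ha'.2)
      (by simpa using hb'.2) (fun t ht htx => by simpa using hother t ht htx)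
    norm_num at A B
    linarith
  -- now F 2
  obtain ⟨w, hw1, hw2, hw3, -⟩ := rolle_gaps (hF 1 (by omega)).1 (hF 1 (by omega)).2 u
      (fun t ht => ⟨Ioo_subset_Icc_self (hu2 t ht).1, (hu2 t ht).2⟩)
  have hxw : x ∉ w := fun h => hw3 x h hxu
  obtain ⟨v, hv1, hv2, hv3, -⟩ := rolle_gaps (hF 2 (by omega)).1 (hF 2 (by omega)).2 (insert x w)
      (fun t ht => by
        rcases Finset.mem_insert.1 ht with rfl | ht
        · exact ⟨Ioo_subset_Icc_self hx, h2⟩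
        · exact ⟨Ioo_subset_Icc_self (hw2 t ht).1, (hw2 t ht).2⟩)
  have hxv : x ∉ v := fun h => hv3 x h (Finset.mem_insert_self _ _)
  rw [Finset.card_insert_of_notMem hxw] at hv1
  have := rolle_iter (m-2) (F := fun i => F (3 + i)) (hF.shift 3 (m-2) (by omega)) (insert x v)
      (by rw [Finset.card_insert_of_notMem hxv]; omega)
      (fun t ht => by
        rcases Finset.mem_insert.1 ht with rfl | ht
        · exact ⟨hx, by simpa using h3⟩
        · simpa using hv2 t ht)
  have e : 3 + (m - 2) = m + 1 := by omega
  simpa [e] using this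

/-- The Rolle lemma. -/
lemma rolle_main {n k : ℕ} (hk : 1 ≤ k) (hkn : k + 2 ≤ n) {F : ℕ → ℝ → ℝ} (hF : DChain n F)
    (s : Finset ℝ) (hcard : n - 1 ≤ s.card) (hs : ∀ t ∈ s, t ∈ Icc (-1:ℝ) 1 ∧ F 0 t = 0) {x : ℝ}
    (hx : x ∈ Ioo (-1:ℝ) 1) (h1 : F k x = 0) (h2 : F (k+1) x = 0) :
    ∃ ξ ∈ Ioo (-1:ℝ) 1, F n ξ = 0 := by
  obtain ⟨u, hu1, hu2⟩ := rolle_iter_closed (k-1) (F := F)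
    (fun i hi => hF i (by omega)) s hs
  have := rolle_core (m := n - k) (by omega) (F := fun i => F (k - 1 + i))
    (hF.shift (k-1) (n-k+1) (by omega)) u (by omega) (by simpa using hu2) hx
    (by have e : k - 1 + 1 = k := by omega
        simpa [e] using h1)
    (by have e : k - 1 + 2 = k + 1 := by omega
        simpa [e] using h2)
  have e : k - 1 + (n - k + 1) = n := by omega
  simpa [e] using this


/-- `j`-th derivative of a polynomial evaluated at `x`. -/
noncomputable def dv (p : ℝ[X]) (j : ℕ) (x : ℝ) : ℝ := (derivative^[j] p).eval x

lemma dv_zero (p : ℝ[X]) (x : ℝ) : dv p 0 x = p.eval x := rfl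
lemma dv_add (p q : ℝ[X]) (j : ℕ) (x : ℝ) : dv (p + q) j x = dv p j x + dv q j x := by
  simp [dv]
lemma dv_sub (p q : ℝ[X]) (j : ℕ) (x : ℝ) : dv (p - q) j x = dv p j x - dv q j x := by
  simp [dv]
lemma dv_C_mul (c : ℝ) (q : ℝ[X]) (j : ℕ) (x : ℝ) : dv (C c * q) j x = c * dv q j x := by
  simp [dv, iterate_derivative_C_mul]
lemma dv_sum {ι : Type*} (s : Finset ι) (p : ι → ℝ[X]) (j : ℕ) (x : ℝ) :
    dv (∑ i ∈ s, p i) j x = ∑ i ∈ s, dv (p i) j x := by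
  simp [dv, iterate_derivative_sum, eval_finsetSum]
lemma dv_derivative (p : ℝ[X]) (j : ℕ) (x : ℝ) : dv (derivative p) j x = dv p (j+1) x := by
  simp [dv, Function.iterate_succ_apply]
lemma dv_iter (p : ℝ[X]) (i j : ℕ) (x : ℝ) : dv (derivative^[i] p) j x = dv p (j+i) x := by
  simp [dv, Function.iterate_add_apply]
lemma dv_hasDerivAt (p : ℝ[X]) (j : ℕ) (x : ℝ) : HasDerivAt (dv p j) (dv p (j+1) x) x := by
  unfold dv
  simp only [Function.iterate_succ_apply']
  exact Polynomial.hasDerivAt _ _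

lemma iterate_X_sub_C_mul (p : ℝ[X]) (r : ℝ) (j : ℕ) :
    derivative^[j+1] ((X - C r) * p) = (X - C r) * derivative^[j+1] p + C ((j:ℝ)+1) * derivative^[j] p := by
  induction j with
  | zero => simp; ring
  | succ j ih =>
    rw [Function.iterate_succ_apply', ih, Function.iterate_succ_apply' derivative (j+1) p,
      Function.iterate_succ_apply' derivative j p]
    simp
    ring

lemma dv_lin_succ (p : ℝ[X]) (r : ℝ) (j : ℕ) (x : ℝ) :
    dv ((X - C r) * p) (j+1) x = (x - r) * dv p (j+1) x + ((j:ℝ)+1) * dv p j x := by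
  unfold dv
  rw [iterate_X_sub_C_mul]; simp

lemma dv_lin_zero (p : ℝ[X]) (r : ℝ) (x : ℝ) :
    dv ((X - C r) * p) 0 x = (x - r) * dv p 0 x := by
  simp [dv]

lemma splits_derivative {p : ℝ[X]} (hp : p.Splits) : (derivative p).Splits := by
  rw [splits_iff_card_roots] at hp ⊢
  apply le_antisymm (card_roots' _)
  have h1 := card_roots_le_derivative p
  have h2 := natDegree_derivative_le p
  omega

lemma splits_iterate {p : ℝ[X]} (hp : p.Splits) (j : ℕ) : (derivative^[j] p).Splits := by
  induction j with
  | zero => exact hp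
  | succ j ih => rw [Function.iterate_succ_apply']; exact splits_derivative ih

/-- induction principle for split polynomials -/
lemma splits_induction {P : ℝ[X] → Prop} (hC : ∀ c : ℝ, P (C c))
    (hm : ∀ (r : ℝ) (q : ℝ[X]), P q → P ((X - C r) * q)) {p : ℝ[X]} (hp : p.Splits) : P p := by
  rw [hp.eq_prod_roots]
  generalize p.roots = s
  induction s using Multiset.induction with
  | empty => simpa using hC _
  | cons a s ih =>
    rw [Multiset.map_cons, Multiset.prod_cons]
    have := hm a _ ih
    convert this using 1
    ring

lemma laguerre {p : ℝ[X]} (hp : p.Splits) (x : ℝ) : 0 ≤ (dv p 1 x)^2 - dv p 0 x * dv p 2 x := by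
  refine splits_induction (P := fun p => 0 ≤ (dv p 1 x)^2 - dv p 0 x * dv p 2 x) ?_ ?_ hp
  · intro c
    have h : derivative^[2] (C c : ℝ[X]) = 0 := by simp
    simp [dv]
  · intro r q ih
    rw [dv_lin_zero, dv_lin_succ, dv_lin_succ]
    have e : ((x - r) * dv q (0 + 1) x + ((0:ℕ) + 1) * dv q 0 x) ^ 2 -
      (x - r) * dv q 0 x * ((x - r) * dv q (1 + 1) x + ((1:ℕ) + 1) * dv q 1 x)
      = (dv q 0 x)^2 + (x-r)^2 * ((dv q 1 x)^2 - dv q 0 x * dv q 2 x) := by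
      push_cast; ring
    rw [e]
    positivity

lemma laguerre' {p : ℝ[X]} (hp : p.Splits) (j : ℕ) (x : ℝ) :
    0 ≤ ((j:ℝ)+1+1) * (dv p (j+1) x)^2 - ((j:ℝ)+1) * dv p j x * dv p (j+2) x := by
  have := laguerre (splits_iterate hp j) x
  simp only [dv_iter] at this
  rw [show 0 + j = j by omega, show 1 + j = j + 1 by omega, show 2 + j = j + 2 by omega] at this
  nlinarith [sq_nonneg (dv p (j+1) x), mul_nonneg (Nat.cast_nonneg (α := ℝ) j) this]

lemma core_bound {n j : ℕ} (hkn : j + 3 ≤ n) {σ : ℝ} {F : ℕ → ℝ → ℝ}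
    (hF : WChain n σ F) (Om Q : ℝ[X]) (hsp : Om.Splits) (hnd : Om.roots.Nodup)
    (hdeg : Om.natDegree + 1 = n) (hr : ∀ r ∈ Om.roots, r ∈ Icc (-1:ℝ) 1)
    (hQ : Q.natDegree + 1 ≤ n) (ε : ℝ) (hε : ε ^ 2 = 1)
    (hQ1 : ∀ r ∈ Om.roots, (Q.eval r)^2 = 1 ∧ 0 ≤ ε * Q.eval r * (derivative Om).eval r)
    {x : ℝ} (hx : x ∈ Ioo (-1:ℝ) 1) :
    |F (j+1) x * dv Om (j+2) x - F (j+2) x * dv Om (j+1) x| ≤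
      ε * (dv Q (j+1) x * dv Om (j+2) x - dv Q (j+2) x * dv Om (j+1) x) +
      σ / (n.factorial * |Om.leadingCoeff|) *
        (((j:ℝ)+2) * (dv Om (j+1) x)^2 - ((j:ℝ)+1) * dv Om j x * dv Om (j+2) x) := by
  classical
  have hOm0 : Om ≠ 0 := fun h => by simp [h] at hdeg; omega
  obtain ⟨hF0, hF1, hFn⟩ := hF
  set s := Om.roots.toFinset with hs
  have hmem : ∀ r, r ∈ s ↔ r ∈ Om.roots := fun r => Multiset.mem_toFinset
  have hcard : s.card = n - 1 := by
    rw [hs, Multiset.toFinset_card_of_nodup hnd, ← hsp.natDegree_eq_card_roots]; omega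
  set w : ℝ → ℝ[X] := fun r => Om /ₘ (X - C r) with hw
  have hfac : ∀ r ∈ s, Om = (X - C r) * w r := fun r hr' =>
    (mul_divByMonic_eq_iff_isRoot.2 (isRoot_of_mem_roots ((hmem r).1 hr'))).symm
  have hwd : ∀ r ∈ s, (derivative Om).eval r = (w r).eval r := by
    intro r hr'
    have := dv_lin_succ (w r) r 0 r
    rw [← hfac r hr'] at this
    simpa [dv] using this
  have hwsp : ∀ r ∈ s, (w r).Splits := fun r hr' =>
    hsp.of_dvd hOm0 ⟨X - C r, by rw [mul_comm]; exact hfac r hr'⟩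
  have hwz : ∀ r ∈ s, ∀ r' ∈ s, r' ≠ r → (w r).eval r' = 0 := by
    intro r h1 r' h2 hne
    have h3 := isRoot_of_mem_roots ((hmem r').1 h2)
    rw [hfac r h1, IsRoot, eval_mul] at h3
    rcases mul_eq_zero.1 h3 with h | h
    · simp at h; exact absurd (sub_eq_zero.1 h) hne
    · exact h
  have hd0 : ∀ r ∈ s, (derivative Om).eval r ≠ 0 := by
    intro r hr' h
    have h1 : Om.rootMultiplicity r = 1 := by
      rw [← count_roots]; exact Multiset.count_eq_one_of_mem hnd ((hmem r).1 hr')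
    have := (one_lt_rootMultiplicity_iff_isRoot hOm0 (t := r)).2
      ⟨isRoot_of_mem_roots ((hmem r).1 hr'), h⟩
    omega
  have hwdeg : ∀ r, (w r).natDegree + 2 ≤ n := by
    intro r
    simp only [hw]
    rw [natDegree_divByMonic _ (monic_X_sub_C r)]
    simp; omega
  -- functional
  set W : ℝ[X] → ℝ := fun p => dv p (j+1) x * dv Om (j+2) x - dv p (j+2) x * dv Om (j+1) x with hW
  have hWw : ∀ r ∈ s, 0 ≤ W (w r) := by
    intro r hr'
    have h1 := dv_lin_succ (w r) r j x
    have h2 := dv_lin_succ (w r) r (j+1) x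
    rw [← hfac r hr'] at h1 h2
    simp only [hW]
    rw [h1, h2]
    have := laguerre' (hwsp r hr') j x
    push_cast
    linarith
  have hWsum : ∀ c : ℝ → ℝ, W (∑ r ∈ s, C (c r) * w r) = ∑ r ∈ s, c r * W (w r) := by
    intro c
    simp only [hW, dv_sum, dv_C_mul, Finset.sum_mul]
    rw [← Finset.sum_sub_distrib]
    exact Finset.sum_congr rfl fun r _ => by ring
  have heval : ∀ c : ℝ → ℝ, ∀ r ∈ s, (∑ r ∈ s, C (c r) * w r).eval r = c r * (derivative Om).eval r := by
    intro c r hr'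
    rw [eval_finsetSum, Finset.sum_eq_single r]
    · simp [hwd r hr']
    · intro b hb hbr; simp [hwz b hb r hr' hbr.symm]
    · exact fun h => absurd hr' h
  have hdegsum : ∀ c : ℝ → ℝ, (∑ r ∈ s, C (c r) * w r).natDegree + 2 ≤ n := by
    intro c
    have : (∑ r ∈ s, C (c r) * w r).natDegree ≤ n - 2 := by
      apply natDegree_sum_le_of_forall_le
      intro r _
      refine (natDegree_C_mul_le _ _).trans ?_
      have := hwdeg r; omega
    omega
  -- Q
  have hWQ : ε * W Q = ∑ r ∈ s, (1 / |(derivative Om).eval r|) * W (w r) := by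
    set P := Q - ∑ r ∈ s, C (Q.eval r / (derivative Om).eval r) * w r with hP
    have hPz : ∀ r ∈ s, P.eval r = 0 := by
      intro r hr'
      rw [hP, eval_sub, heval (fun r => Q.eval r / (derivative Om).eval r) r hr', div_mul_cancel₀ _ (hd0 r hr'), sub_self]
    have hPd : P.natDegree ≤ Om.natDegree := by
      refine (natDegree_sub_le _ _).trans (max_le (by omega) ?_)
      have := hdegsum (fun r => Q.eval r / (derivative Om).eval r)
      omega
    have hPW : W P = 0 := by
      by_cases hP0 : P = 0
      · rw [hP0]; simp [hW, dv]
      have hle : Om.roots ≤ P.roots := by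
        rw [Multiset.le_iff_subset hnd]
        intro r hr'
        exact (mem_roots hP0).2 (hPz r ((hmem r).2 hr'))
      obtain ⟨c, hc⟩ := hsp.dvd_of_roots_le_roots hOm0 hle
      have hc0 : c ≠ 0 := fun h => hP0 (by rw [hc, h, mul_zero])
      have := natDegree_mul hOm0 hc0
      rw [← hc] at this
      have hc1 : c.natDegree = 0 := by omega
      rw [hc, eq_C_of_natDegree_eq_zero hc1, mul_comm]
      simp only [hW, dv_C_mul]; ring
    have hQe : W Q = ∑ r ∈ s, (Q.eval r / (derivative Om).eval r) * W (w r) := by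
      rw [← hWsum (fun r => Q.eval r / (derivative Om).eval r)]
      have : W P = W Q - W (∑ r ∈ s, C (Q.eval r / (derivative Om).eval r) * w r) := by
        rw [hP]; simp only [hW, dv_sub]; ring
      rw [hPW] at this
      linarith
    rw [hQe, Finset.mul_sum]
    refine Finset.sum_congr rfl fun r hr' => ?_
    rw [← mul_assoc]
    congr 1
    obtain ⟨h1, h2⟩ := hQ1 r ((hmem r).1 hr')
    have h3 : (ε * Q.eval r) ^ 2 = 1 := by rw [mul_pow, hε, h1, one_mul]
    have h0 := hd0 r hr'
    rw [← mul_div_assoc]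
    rcases sq_eq_one_iff.mp h3 with h | h
    · rw [h] at h2 ⊢
      rw [abs_of_nonneg (by linarith)]
    · rw [h] at h2 ⊢
      rw [abs_of_nonpos (by linarith)]
      field_simp
  -- interpolant
  set l := ∑ r ∈ s, C (F 0 r / (derivative Om).eval r) * w r with hl
  have hWl : |W l| ≤ ε * W Q := by
    rw [hWQ, hl, hWsum (fun r => F 0 r / (derivative Om).eval r)]
    refine (Finset.abs_sum_le_sum_abs _ _).trans (Finset.sum_le_sum fun r hr' => ?_)
    rw [abs_mul, abs_of_nonneg (hWw r hr'), abs_div]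
    have := hF1 r (hr r ((hmem r).1 hr'))
    have := hWw r hr'
    gcongr
  -- remainder
  set q := (X - C x) * Om with hq
  set Wg : ℝ := (F (j+1) x - dv l (j+1) x) * dv Om (j+2) x - (F (j+2) x - dv l (j+2) x) * dv Om (j+1) x with hWg
  set B : ℝ := dv q (j+1) x * (F (j+2) x - dv l (j+2) x) - dv q (j+2) x * (F (j+1) x - dv l (j+1) x) with hB
  have hchain : DChain n (fun i t => W q * F i t + ((derivative^[i] (C (-W q) * l + C (-Wg) * q + C (-B) * Om)).eval t)) :=
    (hF0.smul (W q)).add (DChain.poly n _)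
  have hval : ∀ i t, (derivative^[i] (C (-W q) * l + C (-Wg) * q + C (-B) * Om)).eval t
      = -W q * dv l i t + -Wg * dv q i t + -B * dv Om i t := by
    intro i t
    rw [← dv_C_mul, ← dv_C_mul, ← dv_C_mul, ← dv_add, ← dv_add]; rfl
  obtain ⟨ξ, hξ, hξ0⟩ := rolle_main (n := n) (k := j+1) (by omega) (by omega) hchain s (by omega)
    (by
      intro t ht
      refine ⟨hr t ((hmem t).1 ht), ?_⟩
      rw [hval]
      have h1 : dv l 0 t = F 0 t := by
        rw [dv_zero, hl, heval (fun r => F 0 r / (derivative Om).eval r) t ht, div_mul_cancel₀ _ (hd0 t ht)]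
      have h2 : dv Om 0 t = 0 := isRoot_of_mem_roots ((hmem t).1 ht)
      have h3 : dv q 0 t = 0 := by rw [hq, dv_lin_zero, h2, mul_zero]
      rw [h1, h2, h3]; ring) hx
    (by rw [hval]; simp only [hW, hWg, hB]; ring)
    (by rw [hval]; simp only [hW, hWg, hB]; ring)
  rw [hval] at hξ0
  have hln : dv l n ξ = 0 := by
    have := hdegsum (fun r => F 0 r / (derivative Om).eval r)
    rw [dv, iterate_derivative_eq_zero (by rw [hl]; omega)]; simp
  have hOmn : dv Om n ξ = 0 := by
    rw [dv, iterate_derivative_eq_zero (by omega)]; simp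
  have hqdeg : q.natDegree = n := by
    rw [hq, natDegree_mul (X_sub_C_ne_zero x) hOm0, natDegree_X_sub_C]; omega
  have hqn : dv q n ξ = n.factorial * Om.leadingCoeff := by
    rw [dv]
    have h1 : (derivative^[n] q).natDegree = 0 := by
      have := natDegree_iterate_derivative q n
      omega
    rw [eq_C_of_natDegree_eq_zero h1, eval_C, coeff_iterate_derivative]
    simp only [zero_add, Nat.descFactorial_self, nsmul_eq_mul]
    congr 1
    have : q.leadingCoeff = Om.leadingCoeff := by
      rw [hq, leadingCoeff_mul, leadingCoeff_X_sub_C, one_mul]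
    rw [← this, leadingCoeff, hqdeg]
  rw [hln, hOmn, hqn] at hξ0
  have hlc : 0 < |Om.leadingCoeff| := abs_pos.2 (leadingCoeff_ne_zero.2 hOm0)
  have hfac0 : (0:ℝ) < n.factorial := by positivity
  have hWq : W q = -((((j:ℝ)+2) * (dv Om (j+1) x)^2 - ((j:ℝ)+1) * dv Om j x * dv Om (j+2) x)) := by
    simp only [hW, hq]
    rw [dv_lin_succ, dv_lin_succ]
    push_cast; ring
  have hlag := laguerre' hsp j x
  have hWgb : |Wg| ≤ σ / (n.factorial * |Om.leadingCoeff|) *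
        (((j:ℝ)+2) * (dv Om (j+1) x)^2 - ((j:ℝ)+1) * dv Om j x * dv Om (j+2) x) := by
    have h1 : Wg * (n.factorial * Om.leadingCoeff) = W q * F n ξ := by linarith
    have h2 : |Wg| * (n.factorial * |Om.leadingCoeff|) = |W q| * |F n ξ| := by
      rw [← abs_mul, ← h1, abs_mul, abs_mul, Nat.abs_cast]
    have h3 := hFn ξ (Ioo_subset_Icc_self hξ)
    have h4 : |W q| = (((j:ℝ)+2) * (dv Om (j+1) x)^2 - ((j:ℝ)+1) * dv Om j x * dv Om (j+2) x) := by
      rw [hWq, abs_neg, abs_of_nonneg]; linarith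
    rw [div_mul_eq_mul_div, le_div_iff₀ (by positivity), h2, ← h4, mul_comm σ]
    gcongr
  have hsplit : F (j+1) x * dv Om (j+2) x - F (j+2) x * dv Om (j+1) x = W l + Wg := by
    simp only [hW, hWg]; ring
  rw [hsplit]
  exact (abs_add_le _ _).trans (add_le_add hWl hWgb)



lemma dT_eq (m : ℕ) : derivative (Chebyshev.T ℝ ((m+1:ℕ):ℤ)) = C ((m:ℝ)+1) * Chebyshev.U ℝ (m:ℤ) := by
  rw [Chebyshev.T_derivative_eq_U]
  push_cast
  rw [add_sub_cancel_right]
  simp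

lemma cheb_ode (m : ℕ) (j : ℕ) (x : ℝ) :
    (1 - x^2) * dv (Chebyshev.T ℝ (m:ℤ)) (j+2) x = (2*(j:ℝ)+1) * x * dv (Chebyshev.T ℝ (m:ℤ)) (j+1) x
      - ((m:ℝ)^2 - (j:ℝ)^2) * dv (Chebyshev.T ℝ (m:ℤ)) j x := by
  have := Chebyshev.one_sub_X_sq_mul_iterate_derivative_T_eval (R := ℝ) (m:ℤ) j x
  simpa [dv] using this

lemma cheb_nodes (m : ℕ) : ∃ p : ℝ[X], p = derivative (Chebyshev.T ℝ ((m+1:ℕ):ℤ)) ∧ p ≠ 0 ∧ p.Splits ∧ p.roots.Nodup ∧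
    p.natDegree = m ∧ p.leadingCoeff = ((m:ℝ)+1) * 2^m ∧
    ∀ r ∈ p.roots, r ∈ Ioo (-1:ℝ) 1 ∧ ((Chebyshev.T ℝ ((m+1:ℕ):ℤ)).eval r)^2 = 1 ∧ p.eval r = 0 ∧
      (Chebyshev.U ℝ (m:ℤ)).eval r = 0 ∧
      (1 - r^2) * (derivative p).eval r = - ((m:ℝ)+1)^2 * (Chebyshev.T ℝ ((m+1:ℕ):ℤ)).eval r := by
  have hm : ((m:ℝ)+1) ≠ 0 := by positivity
  refine ⟨_, rfl, ?_⟩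
  have hU0 : Chebyshev.U ℝ (m:ℤ) ≠ 0 := by
    intro h
    have := Chebyshev.natDegree_U_natCast (R := ℝ) m
    have h2 := Chebyshev.leadingCoeff_U_natCast (R := ℝ) m
    rw [h] at h2; simp at h2
    exact absurd h2 (by positivity)
  have hroots : (derivative (Chebyshev.T ℝ ((m+1:ℕ):ℤ))).roots =
      ((Finset.range m).image (fun (k : ℕ) => Real.cos ((k + 1) * Real.pi / (m + 1)))).val := by
    rw [dT_eq, roots_C_mul _ hm, Chebyshev.roots_U_real]
  have hdeg : (derivative (Chebyshev.T ℝ ((m+1:ℕ):ℤ))).natDegree = m := by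
    rw [dT_eq, natDegree_C_mul hm, Chebyshev.natDegree_U_natCast]
  have hcard := Finset.card_image_of_injOn
    ((Finset.range m).nodup_map_iff_injOn.mp (Chebyshev.roots_U_real_nodup m))
  refine ⟨?_, ?_, ?_, hdeg, ?_, ?_⟩
  · rw [dT_eq]; exact mul_ne_zero (C_ne_zero.2 hm) hU0
  · rw [splits_iff_card_roots, hdeg, hroots]
    rw [Finset.card_val, hcard, Finset.card_range]
  · rw [hroots]; exact Finset.nodup _
  · rw [dT_eq, leadingCoeff_mul, leadingCoeff_C, Chebyshev.leadingCoeff_U_natCast]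
  · intro r hr
    have hroot : (derivative (Chebyshev.T ℝ ((m+1:ℕ):ℤ))).eval r = 0 := isRoot_of_mem_roots hr
    have hode := cheb_ode (m+1) 0 r
    rw [hroots, Finset.mem_val] at hr
    obtain ⟨i, hi, rfl⟩ := Finset.mem_image.mp hr
    have hi' : i < m := Finset.mem_range.1 hi
    have hi2 : (i:ℝ) + 1 < m + 1 := by exact_mod_cast Nat.succ_lt_succ hi'
    set θ := ((i:ℝ) + 1) * Real.pi / (m + 1) with hθ
    have h0 : 0 < θ := by positivity
    have h1 : θ < Real.pi := by
      rw [hθ, div_lt_iff₀ (by positivity)]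
      nlinarith [Real.pi_pos]
    refine ⟨⟨?_, ?_⟩, ?_, hroot, ?_, ?_⟩
    · rw [← Real.cos_pi]; exact Real.cos_lt_cos_of_nonneg_of_le_pi h0.le le_rfl h1
    · rw [← Real.cos_zero]; exact Real.cos_lt_cos_of_nonneg_of_le_pi le_rfl h1.le h0
    · rw [Chebyshev.T_real_cos]
      have : (((m+1:ℕ):ℤ):ℝ) * θ = ((i+1:ℕ):ℝ) * Real.pi := by
        rw [hθ]; push_cast; field_simp
      rw [this, Real.cos_nat_mul_pi, ← pow_mul, mul_comm, pow_mul]; simp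
    · rw [dT_eq] at hroot
      simpa [hm] using hroot
    · have e : dv (Chebyshev.T ℝ ((m+1:ℕ):ℤ)) (0+1) (Real.cos θ) = 0 := hroot
      rw [e] at hode
      simp only [dv] at hode
      simp at hode ⊢
      linarith

lemma sigmaN_pos (n : ℕ) : 0 < sigmaN n := by unfold sigmaN; positivity

/-- (C1) -/
lemma bound_C1 {n j : ℕ} (hkn : j + 3 ≤ n) {σ : ℝ} {F : ℕ → ℝ → ℝ}
    (hF : WChain n σ F) {x : ℝ} (hx : x ∈ Ioo (-1:ℝ) 1)
    (hz : dv (Chebyshev.T ℝ (n:ℤ)) (j+2) x = 0) :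
    |F (j+1) x| * |dv (Chebyshev.T ℝ (n:ℤ)) (j+3) x| ≤
      (((n:ℝ) - (j+1)) / n + ((j:ℝ)+1) / n * (σ / sigmaN n)) *
        (- dv (Chebyshev.T ℝ (n:ℤ)) (j+1) x * dv (Chebyshev.T ℝ (n:ℤ)) (j+3) x) := by
  obtain ⟨m, rfl⟩ : ∃ m, n = m + 1 := ⟨n - 1, by omega⟩
  obtain ⟨p, hp, hp0, hsp, hnd, hdeg, hlc, hr⟩ := cheb_nodes m
  have hm : ((m:ℝ)+1) ≠ 0 := by positivity
  have hQ : - Chebyshev.U ℝ ((m:ℤ)-1) = Chebyshev.T ℝ ((m+1:ℕ):ℤ) - C (1/((m:ℝ)+1)) * ((X - C 0) * p) := by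
    have h1 := Chebyshev.T_eq_X_mul_U_sub_U ℝ ((m:ℤ)-1)
    rw [show (m:ℤ) - 1 + 2 = ((m+1:ℕ):ℤ) by push_cast; ring, show (m:ℤ) - 1 + 1 = (m:ℤ) by ring] at h1
    have h2 : C (1/((m:ℝ)+1)) * C ((m:ℝ)+1) = (1 : ℝ[X]) := by
      rw [← C_mul, one_div_mul_cancel hm, C_1]
    rw [hp, dT_eq, h1, C_0]
    linear_combination (X * Chebyshev.U ℝ (m:ℤ)) * h2
  have hQd : (- Chebyshev.U ℝ ((m:ℤ)-1)).natDegree + 1 ≤ m + 1 := by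
    obtain ⟨l, rfl⟩ : ∃ l, m = l + 1 := ⟨m - 1, by omega⟩
    rw [natDegree_neg, show (((l+1:ℕ):ℤ) - 1) = (l:ℤ) by push_cast; ring, Chebyshev.natDegree_U_natCast]
    omega
  have key := core_bound hkn hF p (- Chebyshev.U ℝ ((m:ℤ)-1)) hsp hnd (by omega)
    (fun r h => Ioo_subset_Icc_self (hr r h).1) hQd (-1) (by norm_num)
    (by
      intro r h
      obtain ⟨h1, h2, h3, h4, h5⟩ := hr r h
      have hQr : (- Chebyshev.U ℝ ((m:ℤ)-1)).eval r = (Chebyshev.T ℝ ((m+1:ℕ):ℤ)).eval r := by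
        rw [hQ]; simp [h3]
      rw [hQr]
      refine ⟨h2, ?_⟩
      have h6 : 0 < 1 - r^2 := by nlinarith [h1.1, h1.2]
      have h7 : (1 - r^2) * (-1 * (Chebyshev.T ℝ ((m+1:ℕ):ℤ)).eval r * (derivative p).eval r) = ((m:ℝ)+1)^2 := by
        linear_combination -(Chebyshev.T ℝ ((m+1:ℕ):ℤ)).eval r * h5 + ((m:ℝ)+1)^2 * h2
      by_contra hneg
      push Not at hneg
      have := mul_neg_of_pos_of_neg h6 hneg
      rw [h7] at this
      exact absurd this (not_lt.2 (by positivity))) hx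
  have hpd : ∀ i, dv p i x = dv (Chebyshev.T ℝ ((m+1:ℕ):ℤ)) (i+1) x := fun i => by rw [hp, dv_derivative]
  rw [hQ] at key
  simp only [dv_sub, dv_C_mul, dv_lin_succ, hpd] at key
  rw [show j+1+1 = j+2 from rfl, show j+2+1 = j+3 from rfl, hz] at key
  rw [hlc] at key
  simp only [mul_zero, sub_zero, zero_pow (two_ne_zero), zero_sub] at key
  rw [abs_mul, abs_of_pos (by positivity : (0:ℝ) < ((m:ℝ)+1) * 2^m)] at key
  refine key.trans (le_of_eq ?_)
  unfold sigmaN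
  push_cast
  field_simp
  ring

/-- the family of bounds with nodes of `(X+δ) T_N'` -/
lemma bound_delta {N j : ℕ} (hkn : j + 2 ≤ N) {σ : ℝ} {F : ℕ → ℝ → ℝ}
    (hF : WChain (N+1) σ F) {x : ℝ} (hx : x ∈ Ioo (-1:ℝ) 1) (δ : ℝ) (hδ : δ^2 = 1)
    (hz : F (j+2) x = 0) (a b d e v v' u : ℝ) (ha : a = dv (Chebyshev.T ℝ (N:ℤ)) (j+1) x)
    (hb : b = dv (Chebyshev.T ℝ (N:ℤ)) (j+2) x) (hd : d = dv (Chebyshev.T ℝ (N:ℤ)) (j+3) x)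
    (he : e = dv (Chebyshev.T ℝ (N:ℤ)) j x) (hv : v = (x + δ) * b + (j+1) * a)
    (hv' : v' = (x + δ) * d + (j+2) * b) (hu : u = (x + δ) * a + j * e) :
    |F (j+1) x| * |v'| ≤ -δ * (a * v' - b * v) +
      (2 / N * (σ / sigmaN (N+1))) * ((j+2) * v^2 - (j+1) * u * v') := by
  obtain ⟨m, rfl⟩ : ∃ m, N = m + 1 := ⟨N - 1, by omega⟩
  obtain ⟨p, hp, hp0, hsp, hnd, hdeg, hlc, hr⟩ := cheb_nodes m
  have hm : ((m:ℝ)+1) ≠ 0 := by positivity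
  have hδ1 : δ = 1 ∨ δ = -1 := sq_eq_one_iff.mp hδ
  set Om := (X - C (-δ)) * p with hOm
  have hOm0 : Om ≠ 0 := mul_ne_zero (X_sub_C_ne_zero _) hp0
  have hOmr : Om.roots = (-δ) ::ₘ p.roots := by
    rw [hOm, roots_mul hOm0, roots_X_sub_C]; rfl
  have hnot : -δ ∉ p.roots := by
    intro h
    have := (hr _ h).1
    rcases hδ1 with h | h <;> rw [h] at this <;> norm_num at this
  have hpd : ∀ i t, dv p i t = dv (Chebyshev.T ℝ ((m+1:ℕ):ℤ)) (i+1) t := fun i t => by rw [hp, dv_derivative]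
  have hode := cheb_ode (m+1) 0 (-δ)
  have hOm1 : ∀ r, (derivative Om).eval r = (r + δ) * (derivative p).eval r + p.eval r := by
    intro r
    have := dv_lin_succ p (-δ) 0 r
    simp [dv] at this
    rw [hOm]; simpa using this
  have key := core_bound (n := m+1+1) (j := j) (by omega) hF Om (Chebyshev.T ℝ ((m+1:ℕ):ℤ))
    (Splits.mul (Splits.X_sub_C _) hsp) (by rw [hOmr]; exact Multiset.nodup_cons.2 ⟨hnot, hnd⟩)
    (by rw [hOm, natDegree_mul (X_sub_C_ne_zero _) hp0, natDegree_X_sub_C]; omega)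
    (by
      intro r h
      rw [hOmr, Multiset.mem_cons] at h
      rcases h with rfl | h
      · rcases hδ1 with h | h <;> rw [h] <;> norm_num
      · exact Ioo_subset_Icc_self (hr r h).1)
    (by rw [Chebyshev.natDegree_T, Int.natAbs_natCast]) (-δ) (by rw [neg_sq, hδ])
    (by
      intro r h
      rw [hOmr, Multiset.mem_cons] at h
      rw [hOm1]
      rcases h with rfl | h
      · have h0 : ((Chebyshev.T ℝ ((m+1:ℕ):ℤ)).eval (-δ))^2 = 1 := by
          rcases hδ1 with h | h
          · rw [h, Chebyshev.T_eval_neg_one]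
            rcases Int.units_eq_one_or (Int.negOnePow ((m+1:ℕ):ℤ)) with h | h <;> rw [h] <;> simp
          · rw [h, neg_neg, Chebyshev.T_eval_one]; norm_num
        refine ⟨h0, ?_⟩
        have h1 : dv (Chebyshev.T ℝ ((m+1:ℕ):ℤ)) (0+1) (-δ) = p.eval (-δ) := by rw [← hpd, dv_zero]
        have h2 : dv (Chebyshev.T ℝ ((m+1:ℕ):ℤ)) 0 (-δ) = (Chebyshev.T ℝ ((m+1:ℕ):ℤ)).eval (-δ) := dv_zero _ _
        rw [h1, h2, neg_sq, hδ] at hode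
        push_cast at hode
        have : -δ * (Chebyshev.T ℝ ((m+1:ℕ):ℤ)).eval (-δ) * ((-δ + δ) * (derivative p).eval (-δ) + p.eval (-δ))
          = ((m:ℝ)+1)^2 := by
          push_cast at h0 ⊢
          linear_combination -(Chebyshev.T ℝ ((m:ℤ)+1)).eval (-δ) * hode + ((m:ℝ)+1)^2 * h0
        rw [this]; positivity
      · obtain ⟨h1, h2, h3, h4, h5⟩ := hr r h
        refine ⟨h2, ?_⟩
        rw [h3, add_zero]
        have h6 : 0 < 1 - r^2 := by nlinarith [h1.1, h1.2]
        have h7 : (1 - r^2) * (-δ * (Chebyshev.T ℝ ((m+1:ℕ):ℤ)).eval r * ((r + δ) * (derivative p).eval r))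
            = ((m:ℝ)+1)^2 * (1 + δ * r) := by
          linear_combination -δ * (r + δ) * (Chebyshev.T ℝ ((m+1:ℕ):ℤ)).eval r * h5 + δ * (r+δ) * ((m:ℝ)+1)^2 * h2 + ((m:ℝ)+1)^2 * hδ
        have h8 : 0 < 1 + δ * r := by
          rcases hδ1 with h | h <;> rw [h] <;> nlinarith [h1.1, h1.2]
        by_contra hneg
        push Not at hneg
        have := mul_neg_of_pos_of_neg h6 hneg
        rw [h7] at this
        exact absurd this (not_lt.2 (by positivity))) hx
  have hlcO : Om.leadingCoeff = ((m:ℝ)+1) * 2^m := by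
    rw [hOm, leadingCoeff_mul, leadingCoeff_X_sub_C, one_mul, hlc]
  have e1 : dv Om (j+1) x = v := by
    rw [hOm, dv_lin_succ, hpd, hpd, hv, ha, hb]; ring
  have e2 : dv Om (j+2) x = v' := by
    rw [hOm, dv_lin_succ, hpd, hpd, hv', hd, hb]; push_cast; ring
  have e3 : dv Om j x = u := by
    rcases j with _ | j
    · rw [hOm, dv_lin_zero, hpd, hu, ha]; push_cast; ring
    · rw [hOm, dv_lin_succ, hpd, hpd, hu, ha, he]; push_cast; ring
  rw [hz, e1, e2, e3, hlcO, ← ha, ← hb] at key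
  rw [zero_mul, sub_zero, abs_mul, abs_of_pos (by positivity : (0:ℝ) < ((m:ℝ)+1) * 2^m)] at key
  refine key.trans (le_of_eq ?_)
  unfold sigmaN
  push_cast
  field_simp
  ring


/-- The quadratic form `Θ`. -/
noncomputable def Th (N k x a b : ℝ) : ℝ := (1-x^2)*b^2 + (N^2-k^2)*a^2 - 2*k*x*a*b

/-- The quadratic form `R`. -/
noncomputable def Rf (N k x a b : ℝ) : ℝ :=
  k*(N^2+k)*a^2 + (k+1)*((N^2+k-1)/(N^2-(k-1)^2))*(1-x^2)*b^2
    - k*x*a*b*(((2*k+1)*N^2+2*k*(k-1))/(N^2-(k-1)^2))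

lemma bound_comb {N j : ℕ} (hkn : j + 2 ≤ N) {σ : ℝ} {F : ℕ → ℝ → ℝ}
    (hF : WChain (N+1) σ F) {x : ℝ} (hx : x ∈ Ioo (-1:ℝ) 1)
    (hz : F (j+2) x = 0) (a b k n : ℝ) (ha : a = dv (Chebyshev.T ℝ (N:ℤ)) (j+1) x)
    (hb : b = dv (Chebyshev.T ℝ (N:ℤ)) (j+2) x) (hk : k = j + 1) (hn : n = N) :
    |F (j+1) x| * ((k+1) * |b|) ≤ Th n k x a b + (2 / n * (σ / sigmaN (N+1))) * Rf n k x a b ∧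
    |F (j+1) x| * |(n^2-k^2)*a - k*x*b| ≤ Th n k x a b + (2 / n * (σ / sigmaN (N+1))) * Rf n k x a b := by
  obtain ⟨d, hd⟩ : ∃ d, d = dv (Chebyshev.T ℝ (N:ℤ)) (j+3) x := ⟨_, rfl⟩
  obtain ⟨e, he⟩ : ∃ e, e = dv (Chebyshev.T ℝ (N:ℤ)) j x := ⟨_, rfl⟩
  have h1 := bound_delta hkn hF hx 1 (by norm_num) hz a b d e _ _ _ ha hb hd he rfl rfl rfl
  have h2 := bound_delta hkn hF hx (-1) (by norm_num) hz a b d e _ _ _ ha hb hd he rfl rfl rfl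
  have o1 := cheb_ode N (j+1) x
  have o2 := cheb_ode N j x
  rw [show j+1+2 = j+3 from rfl, show j+1+1 = j+2 from rfl, ← hd, ← hb, ← ha] at o1
  rw [← hb, ← ha, ← he] at o2
  push_cast at o1
  have hj : (j:ℝ) = k - 1 := by linarith
  rw [hj, ← hn] at h1 h2 o1 o2
  generalize 2 / n * (σ / sigmaN (N+1)) = L at *
  generalize F (j+1) x = f at *
  have hC : n^2 - (k-1)^2 ≠ 0 := by
    have h3 : k + 1 ≤ n := by
      rw [hk, hn]; exact_mod_cast hkn
    have h4 : 1 ≤ k := by rw [hk]; linarith [Nat.cast_nonneg (α := ℝ) j]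
    nlinarith
  have he' : e = ((2*k-1)*x*a - (1-x^2)*b) / (n^2 - (k-1)^2) := by
    rw [eq_div_iff hC]; linarith
  have hx0 : 0 < 1 - x := by linarith [hx.2]
  have hx1 : 0 < 1 + x := by linarith [hx.1]
  have key : (1-x) * (|f| * |(x + 1) * d + (k - 1 + 2) * b|) + (1+x) * (|f| * |(x + -1) * d + (k - 1 + 2) * b|)
      ≤ 2 * (Th n k x a b + L * Rf n k x a b) := by
    refine (add_le_add (mul_le_mul_of_nonneg_left h1 hx0.le) (mul_le_mul_of_nonneg_left h2 hx1.le)).trans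
      (le_of_eq ?_)
    have e1 : Rf n k x a b = k*(n^2+k)*a^2 + (k+1)*(n^2+k-1)*((1-x^2)*b^2/(n^2-(k-1)^2))
      - k*((2*k+1)*n^2+2*k*(k-1)) * (x*a*b/(n^2-(k-1)^2)) := by
      unfold Rf; field_simp
    have e2 : x*a*b/(n^2-(k-1)^2) * (n^2-(k-1)^2) = x*a*b := div_mul_cancel₀ _ hC
    have e3 : (1-x^2)*b^2/(n^2-(k-1)^2) * (n^2-(k-1)^2) = (1-x^2)*b^2 := div_mul_cancel₀ _ hC
    have e4 : b * e = (2*k-1)*(x*a*b/(n^2-(k-1)^2)) - (1-x^2)*b^2/(n^2-(k-1)^2) := by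
      rw [he']; field_simp
    generalize x*a*b/(n^2-(k-1)^2) = Y1 at *
    generalize (1-x^2)*b^2/(n^2-(k-1)^2) = Y2 at *
    rw [e1]; unfold Th
    linear_combination (-2*a - 2*k*L*a) * o1 - 2*k*(k^2-1)*L*e4 + (2*k+4*k^2)*L*e2 - 2*(k+1)*L*e3
  constructor
  · have t : 2 * ((k+1) * |b|) ≤ (1-x) * |(x + 1) * d + (k - 1 + 2) * b| + (1+x) * |(x + -1) * d + (k - 1 + 2) * b| := by
      rw [← abs_of_pos hx0, ← abs_of_pos hx1, ← abs_mul, ← abs_mul]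
      refine le_trans (le_of_eq ?_) (abs_add_le _ _)
      rw [show (1 - x) * ((x + 1) * d + (k - 1 + 2) * b) + (1 + x) * ((x + -1) * d + (k - 1 + 2) * b) = 2 * (k+1) * b by ring]
      rw [abs_mul, abs_of_nonneg (by rw [hk]; positivity : 0 ≤ 2 * (k+1))]; ring
    nlinarith [abs_nonneg f]
  · have t : 2 * |(n^2-k^2)*a - k*x*b| ≤ (1-x) * |(x + 1) * d + (k - 1 + 2) * b| + (1+x) * |(x + -1) * d + (k - 1 + 2) * b| := by
      rw [← abs_of_pos hx0, ← abs_of_pos hx1, ← abs_mul, ← abs_mul]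
      refine le_trans (le_of_eq ?_) (abs_sub _ _)
      rw [show (1 - x) * ((x + 1) * d + (k - 1 + 2) * b) - (1 + x) * ((x + -1) * d + (k - 1 + 2) * b) = (-2) * ((n^2-k^2)*a - k*x*b) by
        linear_combination 2 * o1]
      rw [abs_mul]; norm_num
    nlinarith [abs_nonneg f]


lemma splits_ind_le {P : ℝ[X] → Prop} (w : ℝ) (hC : ∀ c : ℝ, 0 ≤ c → P (C c))
    (hm : ∀ (r : ℝ) (q : ℝ[X]), r ≤ w → P q → P ((X - C r) * q)) {p : ℝ[X]} (hp : p.Splits)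
    (hr : ∀ r ∈ p.roots, r ≤ w) (hlc : 0 ≤ p.leadingCoeff) : P p := by
  rw [hp.eq_prod_roots]
  generalize p.roots = s at *
  induction s using Multiset.induction with
  | empty => simpa using hC _ hlc
  | cons a s ih =>
    rw [Multiset.map_cons, Multiset.prod_cons]
    have := hm a _ (hr a (Multiset.mem_cons_self a s)) (ih fun r h => hr r (Multiset.mem_cons_of_mem h))
    convert this using 1
    ring

/-- monotonicity and convexity properties to the right of the largest root -/
def RightProp (w : ℝ) (q : ℝ[X]) : Prop :=
  ∀ z, w ≤ z → (∀ i, 0 ≤ dv q i w ∧ dv q i w ≤ dv q i z) ∧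
    dv q 0 w + (z-w) * dv q 1 w + (z-w)^2/2 * dv q 2 w ≤ dv q 0 z ∧
    dv q 0 z ≤ dv q 0 w + (z-w) * dv q 1 z

lemma rightProp {w : ℝ} {p : ℝ[X]} (hp : p.Splits)
    (hr : ∀ r ∈ p.roots, r ≤ w) (hlc : 0 ≤ p.leadingCoeff) : RightProp w p := by
  refine splits_ind_le (P := RightProp w) w ?_ ?_ hp hr hlc
  · intro c hc z hz
    refine ⟨fun i => ?_, ?_, ?_⟩
    · rcases i with _ | i
      · simp [dv, hc]
      · simp [dv]
    · simp [dv]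
    · simp [dv]
  · intro r q hr ih z hz
    obtain ⟨h1, h2, h3⟩ := ih z hz
    have hwr : 0 ≤ w - r := by linarith
    have hzr : 0 ≤ z - r := by linarith
    have hzw : 0 ≤ z - w := by linarith
    refine ⟨fun i => ?_, ?_, ?_⟩
    · rcases i with _ | i
      · rw [dv_lin_zero, dv_lin_zero]
        have := h1 0
        refine ⟨by have := this.1; positivity, ?_⟩
        exact mul_le_mul (by linarith) this.2 this.1 hzr
      · rw [dv_lin_succ, dv_lin_succ]
        have a1 := h1 i
        have a2 := h1 (i+1)
        refine ⟨by have := a1.1; have := a2.1; positivity, ?_⟩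
        exact add_le_add (mul_le_mul (by linarith) a2.2 a2.1 hzr) (mul_le_mul_of_nonneg_left a1.2 (by positivity))
    · rw [dv_lin_zero, dv_lin_zero, show (1:ℕ) = 0 + 1 from rfl, show (2:ℕ) = 1 + 1 from rfl, dv_lin_succ, dv_lin_succ]
      have := mul_le_mul_of_nonneg_left h2 hzr
      have h5 := mul_nonneg (pow_nonneg hzw 3) (h1 2).1
      push_cast
      simp only [zero_add] at *
      nlinarith
    · rw [dv_lin_zero, dv_lin_zero, show (1:ℕ) = 0 + 1 from rfl, dv_lin_succ]
      have := mul_le_mul_of_nonneg_left h3 hwr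
      have h6 : 0 ≤ dv q 1 z := (h1 1).1.trans (h1 1).2
      have h5 := mul_nonneg (pow_nonneg hzw 2) h6
      push_cast
      simp only [zero_add] at *
      nlinarith

lemma cheb_one_rec (m i : ℕ) : (2*(i:ℝ)+1) * dv (Chebyshev.T ℝ (m:ℤ)) (i+1) 1
    = ((m:ℝ)^2 - (i:ℝ)^2) * dv (Chebyshev.T ℝ (m:ℤ)) i 1 := by
  have := Chebyshev.iterate_derivative_T_eval_one_recurrence (R := ℝ) (m:ℤ) i
  simpa [dv] using this

lemma cheb_one_pos (m i : ℕ) (h : i ≤ m) : 0 < dv (Chebyshev.T ℝ (m:ℤ)) i 1 := by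
  induction i with
  | zero => simp [dv]
  | succ i ih =>
    have h1 := ih (by omega)
    have h2 := cheb_one_rec m i
    have h3 : (i:ℝ) + 1 ≤ m := by exact_mod_cast h
    have h4 : 0 < ((m:ℝ)^2 - (i:ℝ)^2) := by nlinarith [Nat.cast_nonneg (α := ℝ) i]
    have h5 : 0 < (2*(i:ℝ)+1) := by positivity
    have h6 := mul_pos h4 h1
    rw [← h2] at h6
    exact (pos_iff_pos_of_mul_pos h6).1 h5

lemma cheb_zero_of_gt (m i : ℕ) (h : m < i) (x : ℝ) : dv (Chebyshev.T ℝ (m:ℤ)) i x = 0 := by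
  rw [dv, iterate_derivative_eq_zero (by rw [Chebyshev.natDegree_T]; simpa using h)]; simp

lemma cheb_top_pos (m : ℕ) (x : ℝ) : 0 < dv (Chebyshev.T ℝ (m:ℤ)) m x := by
  have h := cheb_one_pos m m le_rfl
  have h1 : (derivative^[m] (Chebyshev.T ℝ (m:ℤ))).natDegree = 0 := by
    have := natDegree_iterate_derivative (Chebyshev.T ℝ (m:ℤ)) m
    rw [Chebyshev.natDegree_T] at this
    simpa using this
  rw [dv, eq_C_of_natDegree_eq_zero h1, eval_C] at h ⊢
  exact h

lemma cheb_no_double (m : ℕ) {x : ℝ} (hx : x ∈ Ioo (-1:ℝ) 1) (i : ℕ) (hi : i ≤ m)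
    (h0 : dv (Chebyshev.T ℝ (m:ℤ)) i x = 0) (h1 : dv (Chebyshev.T ℝ (m:ℤ)) (i+1) x = 0) : False := by
  have hy : (1 - x^2) ≠ 0 := by nlinarith [hx.1, hx.2]
  have : ∀ d, dv (Chebyshev.T ℝ (m:ℤ)) (i+d) x = 0 ∧ dv (Chebyshev.T ℝ (m:ℤ)) (i+d+1) x = 0 := by
    intro d
    induction d with
    | zero => exact ⟨h0, h1⟩
    | succ d ih =>
      refine ⟨ih.2, ?_⟩
      have := cheb_ode m (i+d) x
      rw [ih.1, ih.2] at this
      simp only [mul_zero, sub_zero] at this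
      exact (mul_eq_zero.1 this).resolve_left hy
  have h2 := (this (m-i)).1
  rw [show i + (m - i) = m by omega] at h2
  exact absurd h2 (cheb_top_pos m x).ne'

lemma cheb_M_ratio (N i : ℕ) (hi : i ≤ N + 1) :
    dv (Chebyshev.T ℝ ((N+1:ℕ):ℤ)) i 1 * ((N:ℝ) * (N + 1 - i)) =
      dv (Chebyshev.T ℝ (N:ℤ)) i 1 * (((N:ℝ)+1) * (N + i)) := by
  induction i with
  | zero => simp [dv]; ring
  | succ i ih =>
    have h := ih (by omega)
    have h1 := cheb_one_rec (N+1) i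
    have h2 := cheb_one_rec N i
    push_cast at *
    have h5 : (2*(i:ℝ)+1) ≠ 0 := by positivity
    apply mul_left_cancel₀ h5
    have e1 : dv (Chebyshev.T ℝ ((N:ℤ)+1)) (i+1) 1 = ((N + 1:ℝ)^2 - (i:ℝ)^2) * dv (Chebyshev.T ℝ ((N:ℤ)+1)) i 1 / (2*(i:ℝ)+1) := by
      rw [eq_div_iff h5]; linarith
    have e2 : dv (Chebyshev.T ℝ (N:ℤ)) (i+1) 1 = ((N:ℝ)^2 - (i:ℝ)^2) * dv (Chebyshev.T ℝ (N:ℤ)) i 1 / (2*(i:ℝ)+1) := by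
      rw [eq_div_iff h5]; linarith
    rw [e1, e2]
    field_simp
    linear_combination (N + 1 + i : ℝ) * (N - i) * h

lemma cheb_rel (N : ℕ) (i : ℕ) (x : ℝ) :
    ((N:ℝ)+1) * dv (Chebyshev.T ℝ (N:ℤ)) (i+1) x = N * (x * dv (Chebyshev.T ℝ ((N+1:ℕ):ℤ)) (i+1) x
      - (N + 1 - i) * dv (Chebyshev.T ℝ ((N+1:ℕ):ℤ)) i x) := by
  have hp : C ((N:ℝ)+1) * derivative (Chebyshev.T ℝ (N:ℤ)) = C (N:ℝ) * ((X - C 0) * derivative (Chebyshev.T ℝ ((N+1:ℕ):ℤ))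
      - C ((N:ℝ)+1) * Chebyshev.T ℝ ((N+1:ℕ):ℤ)) := by
    rcases N with _ | N
    · simp
    · rw [dT_eq, dT_eq]
      have := Chebyshev.T_eq_X_mul_U_sub_U ℝ (N:ℤ)
      push_cast
      rw [show (N:ℤ) + 1 + 1 = N + 2 by ring, this]
      simp only [C_0]
      ring
  have h := congrArg (fun p => dv p i x) hp
  simp only [dv_C_mul, dv_sub, dv_derivative] at h
  rcases i with _ | i
  · rw [dv_lin_zero, dv_derivative] at h
    push_cast at *
    linarith
  · rw [dv_lin_succ, dv_derivative, dv_derivative] at h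
    push_cast at *
    linear_combination h


lemma cheb_right (N i : ℕ) (hi : i ≤ N) (w : ℝ)
    (hw : ∀ r, dv (Chebyshev.T ℝ ((N+1:ℕ):ℤ)) (i+1) r = 0 → r ≤ w) :
    RightProp w (derivative^[i+1] (Chebyshev.T ℝ ((N+1:ℕ):ℤ))) := by
  obtain ⟨p, hp, hp0, hsp, hnd, hdeg, hlc, hroots⟩ := cheb_nodes N
  have e : derivative^[i+1] (Chebyshev.T ℝ ((N+1:ℕ):ℤ)) = derivative^[i] p := by
    rw [hp, Function.iterate_succ_apply]
  have hc : 0 < (derivative^[i] p).coeff (N - i) := by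
    rw [coeff_iterate_derivative, show N - i + i = N by omega]
    have : p.coeff N = ((N:ℝ)+1) * 2^N := by rw [← hlc, leadingCoeff, hdeg]
    rw [this, nsmul_eq_mul]
    have : 0 < N.descFactorial i := Nat.descFactorial_pos.2 hi
    positivity
  have hd : (derivative^[i] p).natDegree = N - i := by
    apply le_antisymm
    · have := natDegree_iterate_derivative p i
      rwa [hdeg] at this
    · exact le_natDegree_of_ne_zero hc.ne'
  refine rightProp ?_ ?_ ?_
  · rw [e]; exact splits_iterate hsp i
  · intro r hr
    exact hw r (isRoot_of_mem_roots hr)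
  · rw [e, leadingCoeff, hd]; exact hc.le

lemma cheb_pos_ge_one (N i : ℕ) (hi : i ≤ N) (z : ℝ) (hz : 1 ≤ z) :
    0 < dv (Chebyshev.T ℝ ((N+1:ℕ):ℤ)) (i+1) z := by
  have h := cheb_right N 0 (by omega) 1 (by
    intro r hr
    obtain ⟨p, hp, hp0, hsp, hnd, hdeg, hlc, hroots⟩ := cheb_nodes N
    have : r ∈ p.roots := by
      rw [mem_roots hp0, hp]
      simpa [dv] using hr
    exact (hroots r this).1.2.le)
  have h1 := ((h z hz).1 i).2
  simp only [dv_iter] at h1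
  exact (cheb_one_pos (N+1) (i+1) (by omega)).trans_le h1

set_option maxHeartbeats 1000000 in
lemma omega_facts {N j : ℕ} (hkn : j + 2 ≤ N) {w : ℝ} (hw0 : 0 ≤ w)
    (hw : IsGreatest {x : ℝ | dv (Chebyshev.T ℝ ((N+1:ℕ):ℤ)) (j+2) x = 0} w) (n k M : ℝ) (hn : n = N) (hk : k = j + 1)
    (hM : M = dv (Chebyshev.T ℝ (N:ℤ)) (j+1) 1) :
    ∃ r, 0 ≤ r ∧ w < 1 ∧
      dv (Chebyshev.T ℝ ((N+1:ℕ):ℤ)) (j+1) w = -r * dv (Chebyshev.T ℝ ((N+1:ℕ):ℤ)) (j+1) 1 ∧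
      0 < dv (Chebyshev.T ℝ ((N+1:ℕ):ℤ)) (j+3) w ∧
      dv (Chebyshev.T ℝ (N:ℤ)) (j+1) w = -w * r * M ∧
      dv (Chebyshev.T ℝ (N:ℤ)) (j+2) w = r * M * (n + k) ∧
      r * (2*k+1) * (2 + (2*k+5)*w) ≤ 2 * (1+w)^2 ∧
      2*k+3 ≤ (1-w) * ((n+1)^2 - (k+1)^2) ∧
      (N = j + 2 → w = 0) ∧
      (N = j + 3 → (2*k+4)*w^2 = 1) ∧
      (j + 3 ≤ N → 0 < w ∧ (1-w^2)*(2*(n+1)^2 - (2*k^2+10*k+11)) ≤ (2*k+7)*(2*k+3)*w^2) := by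
  have hwr : dv (Chebyshev.T ℝ ((N+1:ℕ):ℤ)) (j+2) w = 0 := hw.1
  have hw1 : w < 1 := by
    by_contra h
    exact absurd hwr (cheb_pos_ge_one N (j+1) (by omega) w (not_lt.1 h)).ne'
  have hwI : w ∈ Ioo (-1:ℝ) 1 := ⟨by linarith, hw1⟩
  have hR := cheb_right N (j+1) (by omega) w (fun r hr => hw.2 hr)
  obtain ⟨R1, R2, R3⟩ := hR 1 hw1.le
  simp only [dv_iter] at R1 R2 R3
  have hnn : ∀ i, 0 ≤ dv (Chebyshev.T ℝ ((N+1:ℕ):ℤ)) (j+2+i) w := by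
    intro i
    have := (R1 i).1
    rwa [show i + (j+1+1) = j+2+i by ring] at this
  have h3 : 0 < dv (Chebyshev.T ℝ ((N+1:ℕ):ℤ)) (j+3) w := by
    refine lt_of_le_of_ne (hnn 1) fun h => ?_
    exact cheb_no_double (N+1) hwI (j+2) (by omega) hwr h.symm
  have h4 := hnn 2
  have h5 := hnn 3
  have h6 := hnn 4
  have o0 := cheb_ode (N+1) j w
  have o1 := cheb_ode (N+1) (j+1) w
  have o2 := cheb_ode (N+1) (j+2) w
  have o3 := cheb_ode (N+1) (j+3) w
  have o4 := cheb_ode (N+1) (j+4) w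
  have q1 := cheb_one_rec (N+1) (j+1)
  have q2 := cheb_one_rec (N+1) (j+2)
  have p0 := cheb_rel N j w
  have p1 := cheb_rel N (j+1) w
  have hMp := cheb_one_pos (N+1) (j+1) (by omega)
  have hgp := cheb_one_pos (N+1) (j+2) (by omega)
  have hMr := cheb_M_ratio N (j+1) (by omega)
  have z4 : N = j + 2 → dv (Chebyshev.T ℝ ((N+1:ℕ):ℤ)) (j+4) w = 0 := fun h => cheb_zero_of_gt _ _ (by omega) _
  have z5 : N = j + 3 → dv (Chebyshev.T ℝ ((N+1:ℕ):ℤ)) (j+5) w = 0 := fun h => cheb_zero_of_gt _ _ (by omega) _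
  simp only [add_assoc, Nat.reduceAdd, zero_add] at *
  rw [show 1 + (j+2) = j + 3 by ring] at R2 R3
  rw [show 2 + (j+2) = j + 4 by ring] at R2
  rw [hwr] at R2 R3 o0 o1 o2 p1
  rw [← hM] at hMr
  generalize dv (Chebyshev.T ℝ ((N+1:ℕ):ℤ)) j w = H0 at *
  generalize dv (Chebyshev.T ℝ ((N+1:ℕ):ℤ)) (j+1) w = H1 at *
  generalize dv (Chebyshev.T ℝ ((N+1:ℕ):ℤ)) (j+3) w = H3 at *
  generalize dv (Chebyshev.T ℝ ((N+1:ℕ):ℤ)) (j+4) w = H4 at *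
  generalize dv (Chebyshev.T ℝ ((N+1:ℕ):ℤ)) (j+5) w = H5 at *
  generalize dv (Chebyshev.T ℝ ((N+1:ℕ):ℤ)) (j+6) w = H6 at *
  generalize dv (Chebyshev.T ℝ ((N+1:ℕ):ℤ)) (j+1) 1 = Mn at *
  generalize dv (Chebyshev.T ℝ ((N+1:ℕ):ℤ)) (j+2) 1 = g1 at *
  generalize dv (Chebyshev.T ℝ ((N+1:ℕ):ℤ)) (j+3) 1 = g2 at *
  generalize dv (Chebyshev.T ℝ (N:ℤ)) (j+1) w = A at *
  generalize dv (Chebyshev.T ℝ (N:ℤ)) (j+2) w = B at *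
  push_cast at *
  have hkN : k + 1 ≤ n := by rw [hk, hn]; exact_mod_cast hkn
  have hk1 : 1 ≤ k := by rw [hk]; linarith [Nat.cast_nonneg (α := ℝ) j]
  have cN2 : N = j + 2 → n = k + 1 := fun h => by rw [hn, hk, h]; push_cast; ring
  have cN3 : N = j + 3 → n = k + 2 := fun h => by rw [hn, hk, h]; push_cast; ring
  have cN3' : j + 3 ≤ N → k + 2 ≤ n := fun h => by
    rw [hn, hk]
    have : (j:ℝ) + 3 ≤ N := by exact_mod_cast h
    linarith
  have hj : (j:ℝ) = k - 1 := by linarith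
  rw [hj, ← hn] at o0 o1 o2 o3 o4 q1 q2 p0 p1 hMr
  clear hw hn hM hj hk hkn hwr hnn R1
  have hy : 0 < 1 - w^2 := by nlinarith
  have hkp : 0 < k := by linarith
  have hnp : 0 < n := by linarith
  have hn2 : 0 < (n+1)^2 - k^2 := by
    have : 0 < (n+1-k)*(n+1+k) := mul_pos (by linarith) (by linarith)
    linarith
  have hn3 : 0 < (n+1)^2 - (k-1)^2 := by
    have : 0 < (n+2-k)*(n+k) := mul_pos (by linarith) (by linarith)
    linarith
  refine ⟨-H1/Mn, ?_, hw1, ?_, h3, ?_, ?_, ?_, ?_, ?_, ?_, ?_⟩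
  · have : H1 ≤ 0 := by
      by_contra hh
      push Not at hh
      nlinarith [mul_pos hn2 hh, mul_pos hy h3]
    apply div_nonneg _ hMp.le; linarith
  · field_simp
  · have e : M = Mn * (n * (n+1-k)) / ((n+1)*(n+k)) := by
      rw [eq_div_iff (by positivity)]; linear_combination -hMr
    have e0 : H0 = (2*k-1)*w*H1 / ((n+1)^2-(k-1)^2) := by
      rw [eq_div_iff hn3.ne']; linear_combination o0
    have e1 : A = n * (w*H1 - (n+1-(k-1))*H0) / (n+1) := by
      rw [eq_div_iff (by positivity)]; linear_combination p0
    rw [e1, e0, e]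
    have : (n+1)^2-(k-1)^2 = (n+k)*(n+2-k) := by ring
    rw [this]
    have : n+2-k ≠ 0 := by linarith
    have : n + k ≠ 0 := by linarith
    field_simp
    ring
  · have e : M = Mn * (n * (n+1-k)) / ((n+1)*(n+k)) := by
      rw [eq_div_iff (by positivity)]; linear_combination -hMr
    have e1 : B = n * (0 - (n+1-k)*H1) / (n+1) := by
      rw [eq_div_iff (by positivity)]; linear_combination p1
    rw [e1, e]
    field_simp
    ring
  · have e3 : (1-w^2) * H3 = (-H1/Mn) * (2*k+1) * g1 := by
      have : g1 = ((n+1)^2-k^2) * Mn / (2*k+1) := by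
        rw [eq_div_iff (by positivity)]; linear_combination q1
      rw [this]
      field_simp
      linear_combination o1
    have e4 : (1-w^2) * H4 = (2*k+3) * w * H3 := by linear_combination o2
    generalize -H1/Mn = r at *
    have t : (1-w)^2*g1 * (r * (2*k+1) * (2 + (2*k+5)*w)) ≤ (1-w)^2*g1 * (2 * (1+w)^2) := by
      have := mul_le_mul_of_nonneg_left R2 (by positivity : 0 ≤ 2 * (1-w^2)^2)
      linear_combination this - 2*(1-w)*(1-w^2) * e3 - (1-w)^2*(1-w^2)*e4 - (1-w)^2*(2*k+3)*w*e3
    exact le_of_mul_le_mul_left t (by have : 0 < 1 - w := by linarith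
                                      positivity)
  · have t : g1 * (2*k+3) ≤ g1 * ((1-w) * ((n+1)^2 - (k+1)^2)) := by
      have : (2*k+3) * g2 = ((n+1)^2-(k+1)^2)*g1 := by linear_combination q2
      have h7 := mul_le_mul_of_nonneg_left R3 (by positivity : 0 ≤ 2*k+3)
      linear_combination h7 + (1-w) * this
    exact le_of_mul_le_mul_left t hgp
  · intro h
    rw [z4 h] at o2
    have : (2*k+3) * (w * H3) = 0 := by linear_combination -o2
    rcases mul_eq_zero.1 this with h | h
    · linarith
    · exact (mul_eq_zero.1 h).resolve_right h3.ne'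
  · intro h
    have e4 : (1-w^2) * H4 = (2*k+3) * w * H3 := by linear_combination o2
    rw [z5 h, cN3 h] at o3
    have : (2*k+5) * H3 * ((2*k+4)*w^2 - 1) = 0 := by
      linear_combination (-(1-w^2)) * o3 - (2*k+5)*w*e4
    rcases mul_eq_zero.1 this with h | h
    · have : 0 < (2*k+5) * H3 := by positivity
      linarith
    · linarith
  · intro h
    have hn3 := cN3' h
    have e4 : (1-w^2) * H4 = (2*k+3) * w * H3 := by linear_combination o2
    have e5 : (1-w^2)^2 * H5 = H3 * ((2*k+5)*(2*k+3)*w^2 - (1-w^2)*((n+1)^2-(k+2)^2)) := by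
      linear_combination (1-w^2) * o3 + (2*k+5)*w*e4
    have e6 : (1-w^2)^3 * H6 = w * H3 * ((2*k+5) * ((2*k+7)*(2*k+3)*w^2 - (1-w^2)*(2*(n+1)^2 - (2*k^2+10*k+11)))) := by
      linear_combination (1-w^2)^2 * o4 + (2*k+7)*w*e5 - ((n+1)^2-(k+3)^2)*(1-w^2)*e4
    have hwp : 0 < w := by
      rcases hw0.lt_or_eq with h' | h'
      · exact h'
      · exfalso
        rw [← h'] at e5
        have : 0 < H3 * ((n+1)^2-(k+2)^2) := mul_pos h3 (by nlinarith)
        nlinarith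
    refine ⟨hwp, ?_⟩
    have h8 : 0 ≤ w * H3 * ((2*k+5) * ((2*k+7)*(2*k+3)*w^2 - (1-w^2)*(2*(n+1)^2 - (2*k^2+10*k+11)))) := by
      rw [← e6]; positivity
    have h9 := nonneg_of_mul_nonneg_right h8 (by positivity)
    have h10 := nonneg_of_mul_nonneg_right h9 (by positivity)
    linarith


lemma Th_nonneg {N j : ℕ} (hkn : j + 2 ≤ N) {x : ℝ} (hx : x ∈ Ioo (-1:ℝ) 1) :
    0 ≤ Th N (j+1) x (dv (Chebyshev.T ℝ (N:ℤ)) (j+1) x) (dv (Chebyshev.T ℝ (N:ℤ)) (j+2) x) := by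
  have hz : WChain (N+1) 0 (fun _ _ => (0:ℝ)) := by
    refine ⟨?_, by simp, by simp⟩
    have := DChain.poly (N+1) (0:ℝ[X])
    simpa using this
  have := (bound_comb hkn hz hx rfl _ _ ((j:ℝ)+1) N rfl rfl rfl rfl).1
  simpa using this

lemma mono_facts {N j : ℕ} (hkn : j + 2 ≤ N) {w x : ℝ} (hx0 : 0 ≤ x) (hxw : x ≤ w) (hw1 : w < 1) :
    let a := dv (Chebyshev.T ℝ (N:ℤ)) (j+1)
    let b := dv (Chebyshev.T ℝ (N:ℤ)) (j+2)
    let k : ℝ := j + 1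
    let n : ℝ := N
    (1-x^2) * Th n k x (a x) (b x) + k * (a x)^2 ≤ (1-w^2) * Th n k w (a w) (b w) + k * (a w)^2 ∧
    (n^2-k^2)*(a x)^2 + (1-x^2)*(b x)^2 ≤ (n^2-k^2)*(a w)^2 + (1-w^2)*(b w)^2 := by
  intro a b k n
  have hk1 : 1 ≤ k := by simp only [k]; linarith [Nat.cast_nonneg (α := ℝ) j]
  have ha : ∀ t, HasDerivAt a (b t) t := fun t => dv_hasDerivAt _ _ _
  have hb : ∀ t, HasDerivAt b (dv (Chebyshev.T ℝ (N:ℤ)) (j+3) t) t := fun t => dv_hasDerivAt _ _ _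
  have hode : ∀ t, (1-t^2) * dv (Chebyshev.T ℝ (N:ℤ)) (j+3) t = (2*k+1)*t*b t - (n^2-k^2)*a t := by
    intro t
    have := cheb_ode N (j+1) t
    push_cast at this
    exact this
  have hw0 : 0 ≤ w := hx0.trans hxw
  constructor
  · let f : ℝ → ℝ := fun t => (1-t^2) * Th n k t (a t) (b t) + k * (a t)^2
    have hd : ∀ t, HasDerivAt f (2*(k-1)*t*Th n k t (a t) (b t)) t := by
      intro t
      have i := hasDerivAt_id' t
      have h := (((i.pow 2).const_sub 1).mul (((((i.pow 2).const_sub 1).mul ((hb t).pow 2)).add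
        (((ha t).pow 2).const_mul (n^2-k^2))).sub (((i.mul (ha t)).mul (hb t)).const_mul (2*k)))).add (((ha t).pow 2).const_mul k)
      have h' := h.congr_of_eventuallyEq (f₁ := f) (Filter.Eventually.of_forall fun s => by
        simp only [f, Th, Pi.add_apply, Pi.mul_apply, Pi.sub_apply, Pi.pow_apply]; ring)
      refine h'.congr_deriv ?_
      have := hode t
      simp only [Th, Pi.add_apply, Pi.mul_apply, Pi.sub_apply, Pi.pow_apply]
      push_cast
      linear_combination ((2*(1-t^2)*b t - 2*k*t*a t)) * this
    have := monotoneOn_of_deriv_nonneg (convex_Icc (0:ℝ) w) (f := f)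
      (fun t _ => (hd t).continuousAt.continuousWithinAt)
      (fun t _ => (hd t).differentiableAt.differentiableWithinAt) (by
        intro t ht
        rw [interior_Icc] at ht
        rw [(hd t).deriv]
        have h1 := Th_nonneg hkn (x := t) ⟨by linarith [ht.1], by linarith [ht.2]⟩
        have h2 : 0 ≤ k - 1 := by linarith
        have h3 := ht.1.le
        exact mul_nonneg (mul_nonneg (mul_nonneg zero_le_two h2) h3) h1)
    exact this ⟨hx0, hxw⟩ ⟨hw0, le_rfl⟩ hxw
  · let f : ℝ → ℝ := fun t => (n^2-k^2)*(a t)^2 + (1-t^2)*(b t)^2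
    have hd : ∀ t, HasDerivAt f (4*k*t*(b t)^2) t := by
      intro t
      have i := hasDerivAt_id' t
      have h := (((ha t).pow 2).const_mul (n^2-k^2)).add (((i.pow 2).const_sub 1).mul ((hb t).pow 2))
      have h' := h.congr_of_eventuallyEq (f₁ := f) (Filter.Eventually.of_forall fun s => by
        simp only [f, Pi.add_apply, Pi.mul_apply, Pi.sub_apply, Pi.pow_apply])
      refine h'.congr_deriv ?_
      have := hode t
      simp only [Pi.add_apply, Pi.mul_apply, Pi.sub_apply, Pi.pow_apply]
      push_cast
      linear_combination ((2 * b t)) * this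
    have := monotoneOn_of_deriv_nonneg (convex_Icc (0:ℝ) w) (f := f)
      (fun t _ => (hd t).continuousAt.continuousWithinAt)
      (fun t _ => (hd t).differentiableAt.differentiableWithinAt) (by
        intro t ht
        rw [interior_Icc] at ht
        rw [(hd t).deriv]
        have h3 := ht.1.le
        have : 0 ≤ k := by linarith
        positivity)
    exact this ⟨hx0, hxw⟩ ⟨hw0, le_rfl⟩ hxw

/-- coefficient of `b^2` -/
noncomputable def E1f (N k x : ℝ) : ℝ :=
  k*(k+1)/((N^2-k^2)^2*(N^2-(k-1)^2)) * (N^2*x^2*(2*N^2+2*k^2-1) - (2*N^2+k-1)*(N^2-k^2))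

/-- coefficient of `b p` -/
noncomputable def e2f (N k x : ℝ) : ℝ :=
  k*x*(-N^4+5*k^2*N^2+2*k^2*(k-1))/((N^2-k^2)^2*(N^2-(k-1)^2))

lemma Rf_decomp (N k x a b p : ℝ) (hc : N^2-k^2 ≠ 0) (hC : N^2-(k-1)^2 ≠ 0) (hp : p = (N^2-k^2)*a - k*x*b) :
    Rf N k x a b = (k+1)*(N^2+k)/(N^2-k^2) * Th N k x a b + E1f N k x * b^2 + e2f N k x * (b * p)
      - (N^2+k)/(N^2-k^2)^2 * p^2 := by
  unfold Rf Th E1f e2f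
  rw [hp]
  field_simp
  ring

set_option maxHeartbeats 1000000 in
lemma scalar_core {N k w r M x a b f l : ℝ} (hk : 1 ≤ k) (hN : k + 1 ≤ N) (hx0 : 0 ≤ x) (hxw : x ≤ w) (hw1 : w < 1)
    (hr : 0 ≤ r) (hM : 0 < M) (hl : 0 ≤ l)
    (hI2 : r * (2*k+1) * (2 + (2*k+5)*w) ≤ 2 * (1+w)^2)
    (hTh0 : 0 ≤ Th N k x a b)
    (hPhi : (1-x^2) * Th N k x a b ≤ r^2*M^2*((1-w^2)*(N+k)^2 + k*w^2))
    (hS : (1-x^2)*b^2 ≤ r^2*M^2*((N^2-k^2)*w^2 + (1-w^2)*(N+k)^2))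
    (hab : ¬ (a = 0 ∧ b = 0))
    (h1 : f * ((k+1)*|b|) ≤ Th N k x a b + l * Rf N k x a b)
    (h2 : f * |(N^2-k^2)*a - k*x*b| ≤ Th N k x a b + l * Rf N k x a b)
    {z s e : ℝ} (hz : 0 ≤ z) (hs : 0 ≤ s)
    (H1 : ((1-w^2)*(N+k)^2 + k*w^2) * (1/(k+1)^2 + 1/((N^2-k^2)*(1-w^2))) ≤ z^2)
    (H2 : (N-k)*w^2 ≤ (s^2-1)*((N+k)*(1-w^2)))
    (H3 : E1f N k x/(k+1) + |e2f N k x| ≤ e) (H3' : |e2f N k x| ≤ e)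
    (H4 : ((k+1)*(N^2+k)/(N^2-k^2)*z + e*(N+k)*s)*(1+w)^2
      ≤ (k+1)*((N+1)*(N+k)/((N+k+1)*(N+1-k)))*(2+(2*k+5)*w))
    (H5 : 2*z*(1+w)^2 ≤ 3*(2+(2*k+5)*w)) :
    f ≤ 3/(2*k+1)*M + l*(2*(k+1)*((N+1)*(N+k)/((N+k+1)*(N+1-k)))/(2*k+1)*M) := by
  have hc : 0 < N^2-k^2 := by
    have : 0 < (N-k)*(N+k) := mul_pos (by linarith) (by linarith)
    linarith
  have hC : 0 < N^2-(k-1)^2 := by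
    have : 0 < (N-(k-1))*(N+(k-1)) := mul_pos (by linarith) (by linarith)
    linarith
  have hw0 : 0 ≤ w := hx0.trans hxw
  have hy : 0 < 1 - w^2 := by
    have : 0 < (1-w)*(1+w) := mul_pos (by linarith) (by linarith)
    linarith
  have hyx : 1 - w^2 ≤ 1 - x^2 := by
    have := pow_le_pow_left₀ hx0 hxw 2
    linarith
  have hxp : 0 < 1 - x^2 := by linarith
  have hk0 : 0 < k := by linarith
  obtain ⟨p, hp⟩ : ∃ p, p = (N^2-k^2)*a - k*x*b := ⟨_, rfl⟩
  rw [← hp] at h2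
  obtain ⟨m, hm⟩ : ∃ m, m = max ((k+1)*|b|) |p| := ⟨_, rfl⟩
  have hmb : (k+1)*|b| ≤ m := by rw [hm]; exact le_max_left _ _
  have hmp : |p| ≤ m := by rw [hm]; exact le_max_right _ _
  have hm0 : 0 < m := by
    rcases (le_trans (abs_nonneg p) hmp).lt_or_eq with h | h
    · exact h
    · exfalso
      rw [← h] at hmb hmp
      have hb : b = 0 := by
        have := abs_nonneg b
        have : |b| ≤ 0 := by
          by_contra h'
          push Not at h'
          have : 0 < (k+1)*|b| := by positivity
          linarith
        exact abs_eq_zero.1 (le_antisymm this (abs_nonneg b))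
      have hp0 : p = 0 := abs_eq_zero.1 (le_antisymm hmp (abs_nonneg _))
      rw [hp, hb] at hp0
      have : a = 0 := by
        have : (N^2-k^2)*a = 0 := by linarith
        exact (mul_eq_zero.1 this).resolve_left hc.ne'
      exact hab ⟨this, hb⟩
  have hfm : f * m ≤ Th N k x a b + l * Rf N k x a b := by
    rw [hm]
    rcases max_choice ((k+1)*|b|) |p| with h | h <;> rw [h] <;> assumption
  have hb2 : b^2 ≤ m^2/(k+1)^2 := by
    rw [le_div_iff₀ (by positivity), ← sq_abs b]
    have := pow_le_pow_left₀ (by positivity) hmb 2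
    linarith [mul_pow (k+1) |b| 2]
  have hp2 : p^2 ≤ m^2 := by
    rw [← sq_abs p]; exact pow_le_pow_left₀ (by positivity) hmp 2
  have hThle : Th N k x a b ≤ (1-x^2)*(m^2/(k+1)^2) + m^2/(N^2-k^2) := by
    have e1 : Th N k x a b = (1-x^2)*b^2 + p^2/(N^2-k^2) - k^2*x^2*b^2/(N^2-k^2) := by
      rw [hp]; unfold Th; field_simp; ring
    have : 0 ≤ k^2*x^2*b^2/(N^2-k^2) := by positivity
    have h3 : p^2/(N^2-k^2) ≤ m^2/(N^2-k^2) := by gcongr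
    have h4 : (1-x^2)*b^2 ≤ (1-x^2)*(m^2/(k+1)^2) := by gcongr
    linarith
  obtain ⟨P, hP⟩ : ∃ P, P = (1-w^2)*(N+k)^2 + k*w^2 := ⟨_, rfl⟩
  rw [← hP] at hPhi H1
  have hP0 : 0 ≤ P := by rw [hP]; positivity
  have hThm : Th N k x a b ≤ m * (r * M * z) := by
    refine (sq_le_sq₀ hTh0 (by positivity)).1 ?_
    have s1 : (1-x^2) * Th N k x a b * Th N k x a b ≤ (r^2*M^2*P) * ((1-x^2)*(m^2/(k+1)^2) + m^2/(N^2-k^2)) :=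
      mul_le_mul hPhi hThle hTh0 (by positivity)
    have s2 : Th N k x a b ^2 ≤ (r^2*M^2*P) * (m^2/(k+1)^2 + m^2/((N^2-k^2)*(1-x^2))) := by
      have : (1-x^2) * Th N k x a b ^ 2 ≤ (1-x^2) * ((r^2*M^2*P) * (m^2/(k+1)^2 + m^2/((N^2-k^2)*(1-x^2)))) := by
        refine le_trans (le_of_eq (by ring)) (s1.trans (le_of_eq ?_))
        field_simp
      exact le_of_mul_le_mul_left this hxp
    have s3 : m^2/((N^2-k^2)*(1-x^2)) ≤ m^2/((N^2-k^2)*(1-w^2)) := by gcongr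
    calc Th N k x a b ^2 ≤ (r^2*M^2*P) * (m^2/(k+1)^2 + m^2/((N^2-k^2)*(1-w^2))) :=
          s2.trans (by gcongr)
      _ = (r^2*M^2*m^2) * (P * (1/(k+1)^2 + 1/((N^2-k^2)*(1-w^2)))) := by ring
      _ ≤ (r^2*M^2*m^2) * z^2 := by gcongr
      _ = (m * (r * M * z))^2 := by ring
  have hbs : |b| ≤ r * M * ((N+k)*s) := by
    have hNk : 0 < N + k := by linarith
    refine (sq_le_sq₀ (abs_nonneg b) (by positivity)).1 ?_
    rw [sq_abs]
    have t1 : (1-w^2)*b^2 ≤ (1-w^2) * (r*M*((N+k)*s))^2 := by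
      have u1 : (1-w^2)*b^2 ≤ (1-x^2)*b^2 := by gcongr
      have u2 : (N^2-k^2)*w^2 + (1-w^2)*(N+k)^2 ≤ (1-w^2)*(N+k)^2*s^2 := by
        have := mul_le_mul_of_nonneg_left H2 (by linarith : 0 ≤ N + k)
        linarith
      have u3 := mul_le_mul_of_nonneg_left u2 (by positivity : 0 ≤ r^2*M^2)
      linarith
    exact le_of_mul_le_mul_left t1 hy
  have he : 0 ≤ e := (abs_nonneg _).trans H3'
  have hRle : Rf N k x a b ≤ (k+1)*(N^2+k)/(N^2-k^2) * Th N k x a b + e * |b| * m := by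
    rw [Rf_decomp N k x a b p hc.ne' hC.ne' hp]
    have v1 : 0 ≤ (N^2+k)/(N^2-k^2)^2 * p^2 := by positivity
    have v2 : e2f N k x * (b*p) ≤ |e2f N k x| * |b| * m := by
      calc e2f N k x * (b*p) ≤ |e2f N k x * (b*p)| := le_abs_self _
        _ = |e2f N k x| * |b| * |p| := by rw [abs_mul, abs_mul, mul_assoc]
        _ ≤ _ := by gcongr
    have v3 : E1f N k x * b^2 + |e2f N k x| * |b| * m ≤ e * |b| * m := by
      rcases le_total (E1f N k x) 0 with h | h
      · have : E1f N k x * b^2 ≤ 0 := mul_nonpos_of_nonpos_of_nonneg h (sq_nonneg _)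
        have : |e2f N k x| * |b| * m ≤ e * |b| * m := by gcongr
        linarith
      · have : E1f N k x * b^2 ≤ E1f N k x/(k+1) * |b| * m := by
          calc E1f N k x * b^2 = E1f N k x/(k+1) * |b| * ((k+1)*|b|) := by
                rw [← sq_abs b]; field_simp
            _ ≤ _ := by gcongr
        have : (E1f N k x/(k+1) + |e2f N k x|) * |b| * m ≤ e * |b| * m := by gcongr
        linarith
    linarith
  obtain ⟨G, hG⟩ : ∃ G, G = (N+1)*(N+k)/((N+k+1)*(N+1-k)) := ⟨_, rfl⟩
  rw [← hG] at H4 ⊢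
  have hG0 : 0 < G := by
    rw [hG]
    have : 0 < N+1-k := by linarith
    have : 0 < N + k := by linarith
    have : 0 < N + 1 := by linarith
    have : 0 < N + k + 1 := by linarith
    positivity
  have hrT : r * z ≤ 3/(2*k+1) := by
    rw [le_div_iff₀ (by positivity)]
    have : (2*(1+w)^2) * (r*z*(2*k+1)) ≤ (2*(1+w)^2) * 3 := by
      have := mul_le_mul_of_nonneg_left H5 (by positivity : 0 ≤ r*(2*k+1))
      linarith
    exact le_of_mul_le_mul_left this (by positivity)
  have hrR : r * ((k+1)*(N^2+k)/(N^2-k^2)*z + e*(N+k)*s) ≤ 2*(k+1)*G/(2*k+1) := by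
    rw [le_div_iff₀ (by positivity)]
    have : (1+w)^2 * (r * ((k+1)*(N^2+k)/(N^2-k^2)*z + e*(N+k)*s) * (2*k+1)) ≤ (1+w)^2 * (2*(k+1)*G) := by
      have i1 := mul_le_mul_of_nonneg_left H4 (by positivity : 0 ≤ r*(2*k+1))
      have i2 := mul_le_mul_of_nonneg_left hI2 (by positivity : 0 ≤ (k+1)*G)
      linarith
    exact le_of_mul_le_mul_left this (by positivity)
  have fin1 : Th N k x a b ≤ m * (3/(2*k+1)*M) := by
    refine hThm.trans ?_
    have := mul_le_mul_of_nonneg_left hrT (by positivity : 0 ≤ m * M)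
    linarith
  have fin2 : Rf N k x a b ≤ m * (2*(k+1)*G/(2*k+1)*M) := by
    have w1 : (k+1)*(N^2+k)/(N^2-k^2) * Th N k x a b ≤ (k+1)*(N^2+k)/(N^2-k^2) * (m * (r * M * z)) :=
      mul_le_mul_of_nonneg_left hThm (by positivity)
    have w2 : e * |b| * m ≤ e * (r * M * ((N+k)*s)) * m := by gcongr
    have := mul_le_mul_of_nonneg_left hrR (by positivity : 0 ≤ m * M)
    linarith
  have fin3 := mul_le_mul_of_nonneg_left fin2 hl
  have : m * f ≤ m * (3/(2*k+1)*M + l*(2*(k+1)*G/(2*k+1)*M)) := by linarith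
  exact le_of_mul_le_mul_left this hm0


/-- existence of the numerical parameters used by `scalar_core` -/
def ParamOK (N k w : ℝ) : Prop :=
  ∃ z s e : ℝ, 0 ≤ z ∧ 0 ≤ s ∧
    ((1-w^2)*(N+k)^2 + k*w^2) * (1/(k+1)^2 + 1/((N^2-k^2)*(1-w^2))) ≤ z^2 ∧
    (N-k)*w^2 ≤ (s^2-1)*((N+k)*(1-w^2)) ∧
    (∀ x, 0 ≤ x → x ≤ w → E1f N k x/(k+1) + |e2f N k x| ≤ e ∧ |e2f N k x| ≤ e) ∧
    ((k+1)*(N^2+k)/(N^2-k^2)*z + e*(N+k)*s)*(1+w)^2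
      ≤ (k+1)*((N+1)*(N+k)/((N+k+1)*(N+1-k)))*(2+(2*k+5)*w) ∧
    2*z*(1+w)^2 ≤ 3*(2+(2*k+5)*w)

lemma param_reduce {N k w A t s e Z : ℝ} (hk : 1 ≤ k) (hN : k + 1 ≤ N) (hw0 : 0 ≤ w) (hw1 : w < 1)
    (hs : 0 ≤ s)
    (hZ : ((1-w^2)*(N+k)^2 + k*w^2) * (1/(k+1)^2 + 1/((N^2-k^2)*(1-w^2))) ≤ Z) (hZ0 : 0 ≤ Z)
    (H2 : (N-k)*w^2 ≤ (s^2-1)*((N+k)*(1-w^2)))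
    (H3 : ∀ x, 0 ≤ x → x ≤ w → E1f N k x/(k+1) + |e2f N k x| ≤ e ∧ |e2f N k x| ≤ e)
    (hg : (N^2+k)*((N+k+1)*(N+1-k)) ≤ (N^2-k^2)*((N+1)*(N+k)))
    (ht : 0 ≤ t) (hes : e*s*((N+k+1)*(N+1-k)) ≤ t*(k+1)*(N+1))
    (hA : A*(1+w)^2 = 2+(2*k+5)*w) (hA0 : 0 < A) (hAZ : Z + 2*t*A ≤ A^2) : ParamOK N k w := by
  have hc : 0 < N^2-k^2 := by
    have : 0 < (N-k)*(N+k) := mul_pos (by linarith) (by linarith)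
    linarith
  have htA : t ≤ A := by
    by_contra h
    push Not at h
    have h1 : A*A < t*A := mul_lt_mul_of_pos_right h hA0
    have h2 : 0 < t*A := mul_pos (lt_trans hA0 h) hA0
    linarith [sq A]
  have hP : 0 < (N+k+1)*(N+1-k) := mul_pos (by linarith) (by linarith)
  have hG : (N^2+k)/(N^2-k^2) ≤ (N+1)*(N+k)/((N+k+1)*(N+1-k)) := by
    rw [div_le_div_iff₀ hc hP]; linarith
  have hes' : e*(N+k)*s ≤ t*(k+1)*((N+1)*(N+k)/((N+k+1)*(N+1-k))) := by
    rw [mul_div_assoc', le_div_iff₀ hP]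
    have := mul_le_mul_of_nonneg_right hes (show 0 ≤ N+k by linarith)
    linarith
  refine ⟨A - t, s, e, by linarith, hs, ?_, H2, H3, ?_, ?_⟩
  · nlinarith [sq_nonneg t]
  · rw [← hA]
    have h3 : (k+1)*(N^2+k)/(N^2-k^2)*(A-t) ≤ (k+1)*((N+1)*(N+k)/((N+k+1)*(N+1-k)))*(A-t) := by
      rw [mul_div_assoc]
      exact mul_le_mul_of_nonneg_right (mul_le_mul_of_nonneg_left hG (by linarith)) (by linarith)
    have h4 : (k+1)*(N^2+k)/(N^2-k^2)*(A-t) + e*(N+k)*s ≤ (k+1)*((N+1)*(N+k)/((N+k+1)*(N+1-k)))*A := by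
      linarith
    have := mul_le_mul_of_nonneg_right h4 (sq_nonneg (1+w))
    linarith
  · rw [← hA]
    have : 2*(A-t) ≤ 3*A := by linarith
    have := mul_le_mul_of_nonneg_right this (sq_nonneg (1+w))
    linarith

lemma Z_bound {N k w B D : ℝ} (hk : 1 ≤ k) (hN : k + 1 ≤ N) (hw0 : 0 ≤ w) (hw1 : w < 1)
    (hB : (1-w^2)*(N+k)^2 ≤ B*(k+1)^2) (hD : k*w^2 ≤ D*((N^2-k^2)*(1-w^2))) :
    ((1-w^2)*(N+k)^2 + k*w^2) * (1/(k+1)^2 + 1/((N^2-k^2)*(1-w^2)))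
      ≤ B + (N+k)/(N-k) + k/(k+1)^2*w^2 + D := by
  have hy : 0 < 1 - w^2 := by
    have : 0 < (1-w)*(1+w) := mul_pos (by linarith) (by linarith)
    linarith
  have hm : 0 < N - k := by linarith
  have hp : 0 < N + k := by linarith
  have hc : N^2-k^2 = (N-k)*(N+k) := by ring
  have e1 : ((1-w^2)*(N+k)^2 + k*w^2) * (1/(k+1)^2 + 1/((N^2-k^2)*(1-w^2)))
      = (1-w^2)*(N+k)^2/(k+1)^2 + (N+k)/(N-k) + k/(k+1)^2*w^2 + k*w^2/((N^2-k^2)*(1-w^2)) := by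
    rw [hc]
    have h1 := hm.ne'
    have h2 := hp.ne'
    have h3 := hy.ne'
    have h4 : k + 1 ≠ 0 := by linarith
    field_simp
    ring
  rw [e1]
  have h1 : (1-w^2)*(N+k)^2/(k+1)^2 ≤ B := by
    rw [div_le_iff₀ (by positivity)]; exact hB
  have h2 : k*w^2/((N^2-k^2)*(1-w^2)) ≤ D := by
    rw [div_le_iff₀ (by rw [hc]; positivity)]; exact hD
  linarith

lemma H2_bound {N k w s q : ℝ} (hk : 1 ≤ k) (hN : k + 1 ≤ N) (hw0 : 0 ≤ w) (hw1 : w < 1)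
    (I4 : 2*k+3 ≤ (1-w)*((N+1)^2-(k+1)^2)) (hq : w^2 ≤ q*(1+w)) (hs : 1 ≤ s^2)
    (h : q*((N-k)^2*(N+k+2)) ≤ (s^2-1)*((2*k+3)*(N+k))) :
    (N-k)*w^2 ≤ (s^2-1)*((N+k)*(1-w^2)) := by
  have hX : 0 < (N-k)*(N+k+2) := mul_pos (by linarith) (by linarith)
  have h1 : (N-k)*w^2*((N-k)*(N+k+2)) ≤ (s^2-1)*((N+k)*(1-w^2))*((N-k)*(N+k+2)) := by
    have a1 := mul_le_mul_of_nonneg_left hq (show 0 ≤ (N-k)*((N-k)*(N+k+2)) from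
      mul_nonneg (by linarith) hX.le)
    have a2 := mul_le_mul_of_nonneg_right h (show 0 ≤ 1+w by linarith)
    have a3 := mul_le_mul_of_nonneg_left I4 (show 0 ≤ (s^2-1)*((N+k)*(1+w)) from
      mul_nonneg (by linarith) (mul_nonneg (by linarith) (by linarith)))
    nlinarith
  exact le_of_mul_le_mul_right h1 hX

lemma D_bound {N k w q : ℝ} (hk : 1 ≤ k) (hN : k + 2 ≤ N) (hw0 : 0 ≤ w) (hw1 : w < 1)
    (I4 : 2*k+3 ≤ (1-w)*((N+1)^2-(k+1)^2)) (hq : w^2 ≤ q*(1+w)) (hq0 : 0 ≤ q) :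
    k*w^2 ≤ (q/2)*((N^2-k^2)*(1-w^2)) := by
  have hX : 0 < N+k+2 := by linarith
  have h1 : k*w^2*(N+k+2) ≤ (q/2)*((N^2-k^2)*(1-w^2))*(N+k+2) := by
    have a1 := mul_le_mul_of_nonneg_left hq (show 0 ≤ k*(N+k+2) from
      mul_nonneg (by linarith) hX.le)
    have a3 := mul_le_mul_of_nonneg_left I4 (show 0 ≤ (q/2)*((N+k)*(1+w)) from
      mul_nonneg (by linarith) (mul_nonneg (by linarith) (by linarith)))
    have a2 : 2*(k*(N+k+2)) ≤ (2*k+3)*(N+k) := by nlinarith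
    have a4 := mul_le_mul_of_nonneg_left a2 (show 0 ≤ (q/2)*(1+w) from
      mul_nonneg (by linarith) (by linarith))
    nlinarith
  exact le_of_mul_le_mul_right h1 hX

lemma e_bound {N k w E m : ℝ} (hk : 1 ≤ k) (hN : k + 1 ≤ N) (hE0 : 0 ≤ E)
    (hE : ∀ x, 0 ≤ x → x ≤ w → N^2*x^2*(2*N^2+2*k^2-1) - (2*N^2+k-1)*(N^2-k^2) ≤ E)
    (hm : |(-N^4+5*k^2*N^2+2*k^2*(k-1))| ≤ m) :
    ∀ x, 0 ≤ x → x ≤ w → E1f N k x/(k+1) + |e2f N k x| ≤ k*(E+w*m)/((N^2-k^2)^2*(N^2-(k-1)^2)) ∧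
      |e2f N k x| ≤ k*(E+w*m)/((N^2-k^2)^2*(N^2-(k-1)^2)) := by
  intro x hx0 hxw
  have hc : 0 < N^2-k^2 := by
    have : 0 < (N-k)*(N+k) := mul_pos (by linarith) (by linarith)
    linarith
  have hC : 0 < N^2-(k-1)^2 := by
    have : 0 < (N-(k-1))*(N+(k-1)) := mul_pos (by linarith) (by linarith)
    linarith
  have hD : 0 < (N^2-k^2)^2*(N^2-(k-1)^2) := by positivity
  have hk0 : 0 < k := by linarith
  have h2 : |e2f N k x| ≤ k*(w*m)/((N^2-k^2)^2*(N^2-(k-1)^2)) := by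
    unfold e2f
    rw [abs_div, abs_of_pos hD, abs_mul, abs_of_nonneg (mul_nonneg hk0.le hx0)]
    apply div_le_div_of_nonneg_right _ hD.le
    rw [mul_assoc]
    exact mul_le_mul_of_nonneg_left (mul_le_mul hxw hm (abs_nonneg _) (hx0.trans hxw)) hk0.le
  have h1 : E1f N k x/(k+1) ≤ k*E/((N^2-k^2)^2*(N^2-(k-1)^2)) := by
    have : E1f N k x/(k+1) = k*(N^2*x^2*(2*N^2+2*k^2-1) - (2*N^2+k-1)*(N^2-k^2))/((N^2-k^2)^2*(N^2-(k-1)^2)) := by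
      unfold E1f
      have h1 := hc.ne'
      have h2 := hC.ne'
      have h3 : k + 1 ≠ 0 := by linarith
      field_simp
    rw [this]
    exact div_le_div_of_nonneg_right (mul_le_mul_of_nonneg_left (hE x hx0 hxw) hk0.le) hD.le
  have h3 : k*(E+w*m)/((N^2-k^2)^2*(N^2-(k-1)^2)) = k*E/((N^2-k^2)^2*(N^2-(k-1)^2)) + k*(w*m)/((N^2-k^2)^2*(N^2-(k-1)^2)) := by
    rw [← add_div]; ring
  have h4 : 0 ≤ k*E/((N^2-k^2)^2*(N^2-(k-1)^2)) := by positivity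
  rw [h3]
  constructor <;> linarith

lemma E_bound {N k w : ℝ} (hk : 1 ≤ k) (hN : k + 1 ≤ N) (hw1 : w < 1) :
    ∀ x, 0 ≤ x → x ≤ w → N^2*x^2*(2*N^2+2*k^2-1) - (2*N^2+k-1)*(N^2-k^2) ≤ 4*k^2*N^2*w^2 := by
  intro x hx0 hxw
  have hc : 2*k+1 ≤ N^2-k^2 := by nlinarith
  have h2 : x^2 ≤ w^2 := pow_le_pow_left₀ hx0 hxw 2
  have h1 : x^2 ≤ 1 := by nlinarith
  have a1 := mul_le_mul_of_nonneg_left h1 (show 0 ≤ N^2*(2*N^2-2*k^2-1) from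
    mul_nonneg (sq_nonneg _) (by linarith))
  have a2 := mul_le_mul_of_nonneg_left h2 (show 0 ≤ 4*k^2*N^2 by positivity)
  have a3 : 0 ≤ (k-1)*(N^2-k^2) := mul_nonneg (by linarith) (by linarith)
  have a4 := sq_nonneg N
  linarith

lemma m_bound {N k m : ℝ} (hk : 1 ≤ k) (hN : k + 1 ≤ N) (h1 : N^2 ≤ m) (h2 : 4*k^2 ≤ m) :
    |(-N^4+5*k^2*N^2+2*k^2*(k-1))| ≤ N^2*m := by
  have hc : 2*k+1 ≤ N^2-k^2 := by nlinarith
  have a0 : k^2 ≤ N^2 := by linarith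
  have a1 := mul_le_mul_of_nonneg_left h1 (sq_nonneg N)
  have a2 := mul_le_mul_of_nonneg_left h2 (sq_nonneg N)
  have a3 := mul_le_mul_of_nonneg_left hc (sq_nonneg N)
  have a4 := mul_le_mul_of_nonneg_right a0 (show 0 ≤ 2*k+1 by linarith)
  have a5 : 0 ≤ k^2*(k-1) := mul_nonneg (sq_nonneg _) (by linarith)
  have a6 : 0 ≤ k^2*N^2 := by positivity
  have a7 := sq_nonneg k
  rw [abs_le]
  constructor <;> linarith

lemma le_of_sq_le_sq_aux {a b : ℝ} (h : a^2 ≤ b^2) (hb : 0 ≤ b) : a ≤ b :=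
  (le_abs_self a).trans (abs_le_of_sq_le_sq h hb)

lemma A_bound {k w A : ℝ} (hk : 3 ≤ k) (hw0 : 0 ≤ w) (hw1 : w < 1) (hw : 3 ≤ (2*k+6)*w^2)
    (hA : A*(1+w)^2 = 2+(2*k+5)*w) (hA0 : 0 < A) : 3*k+1 ≤ A^2 := by
  obtain ⟨v, hv0, hv⟩ : ∃ v : ℝ, 0 < v ∧ (2*k+6)*v^2 = 3 := by
    refine ⟨√(3/(2*k+6)), Real.sqrt_pos.2 (by positivity), ?_⟩
    rw [Real.sq_sqrt (by positivity)]
    field_simp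
  obtain ⟨S, hS0, hS⟩ : ∃ S : ℝ, 0 ≤ S ∧ S^2 = 3*k+1 :=
    ⟨√(3*k+1), Real.sqrt_nonneg _, Real.sq_sqrt (by linarith)⟩
  have hvw : v ≤ w := by
    apply le_of_sq_le_sq_aux ?_ hw0
    have : (2*k+6)*v^2 ≤ (2*k+6)*w^2 := by linarith
    exact le_of_mul_le_mul_left this (by linarith)
  have hv2 : v ≤ 1/2 := by
    apply le_of_sq_le_sq_aux ?_ (by norm_num)
    nlinarith [sq_nonneg v]
  -- endpoint 1
  have f1 : 4*S ≤ 2*k+7 := by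
    apply le_of_sq_le_sq_aux ?_ (by linarith)
    nlinarith [sq_nonneg (2*k-5)]
  -- endpoint v
  have g : S*v*(1+v) ≤ 3 - v := by
    apply le_of_sq_le_sq_aux ?_ (by linarith)
    have e : (S*v*(1+v))^2 = (9/2-8*v^2)*(1+v)^2 := by
      have : S^2*v^2 = 9/2-8*v^2 := by rw [hS]; linarith
      calc (S*v*(1+v))^2 = S^2*v^2*(1+v)^2 := by ring
        _ = _ := by rw [this]
    rw [e]
    nlinarith [mul_nonneg hv0.le (sq_nonneg (v-17/40)), sq_nonneg (v^2-18/100), sq_nonneg (v-17/40)]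
  have f2 : S*(1+v)^2 ≤ 2+(2*k+5)*v := by
    have h1 : v*(S*(1+v)^2) ≤ v*(2+(2*k+5)*v) := by
      have := mul_le_mul_of_nonneg_right g (show 0 ≤ 1+v by linarith)
      nlinarith
    exact le_of_mul_le_mul_left h1 hv0
  have f3 : S*(1+w)^2 ≤ 2+(2*k+5)*w := by
    have a1 := mul_le_mul_of_nonneg_right f1 (show 0 ≤ w - v by linarith)
    have a2 := mul_le_mul_of_nonneg_right f2 (show 0 ≤ 1 - w by linarith)
    have a3 : 0 ≤ S*((w-v)*((1-w)*(1-v))) :=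
      mul_nonneg hS0 (mul_nonneg (by linarith) (mul_nonneg (by linarith) (by linarith)))
    have : (1-v)*(S*(1+w)^2) ≤ (1-v)*(2+(2*k+5)*w) := by linarith
    exact le_of_mul_le_mul_left this (by linarith)
  have f4 : S ≤ A := by
    rw [← hA] at f3
    exact le_of_mul_le_mul_right f3 (by positivity)
  rw [← hS]
  exact pow_le_pow_left₀ hS0 f4 2


lemma param_finish {N k w A s e e0 G κ S Z : ℝ} (hk : 1 ≤ k) (hN : k + 1 ≤ N) (hw0 : 0 ≤ w) (hw1 : w < 1)
    (hs : 0 ≤ s)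
    (hZ : ((1-w^2)*(N+k)^2 + k*w^2) * (1/(k+1)^2 + 1/((N^2-k^2)*(1-w^2))) ≤ Z) (hZ0 : 0 ≤ Z)
    (H2 : (N-k)*w^2 ≤ (s^2-1)*((N+k)*(1-w^2)))
    (H3 : ∀ x, 0 ≤ x → x ≤ w → E1f N k x/(k+1) + |e2f N k x| ≤ e ∧ |e2f N k x| ≤ e)
    (hg : (N^2+k)*((N+k+1)*(N+1-k)) ≤ (N^2-k^2)*((N+1)*(N+k)))
    (he : e = w*e0) (hG0 : 0 ≤ G) (hes : e0*s*((N+k+1)*(N+1-k)) ≤ G*((k+1)*(N+1)))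
    (hκ : w ≤ κ*A)
    (hA : A*(1+w)^2 = 2+(2*k+5)*w) (hA0 : 0 < A) (hS0 : 0 < S) (hS : S ≤ A^2)
    (hfin : Z + 2*κ*G*S ≤ S) : ParamOK N k w := by
  refine param_reduce (t := w*G) hk hN hw0 hw1 hs hZ hZ0 H2 H3 hg (mul_nonneg hw0 hG0) ?_ hA hA0 ?_
  · rw [he]
    have := mul_le_mul_of_nonneg_left hes hw0
    linarith
  · have a1 := mul_le_mul_of_nonneg_right hκ (mul_nonneg hG0 hA0.le)
    have hQ : 0 ≤ 1 - 2*κ*G := by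
      have : 0 ≤ (1-2*κ*G)*S := by linarith
      exact nonneg_of_mul_nonneg_left this hS0
    have a2 := mul_le_mul_of_nonneg_left hS hQ
    nlinarith

lemma B_bound {N k w : ℝ} (hk : 3 ≤ k) (hw1 : w < 1) (hw0 : 0 ≤ w)
    (I1 : (1-w^2)*(2*(N+1)^2-(2*k^2+10*k+11)) ≤ (2*k+7)*(2*k+3)*w^2) :
    (1-w^2)*(N+k)^2 ≤ 42/10*(k+1)^2 := by
  have hy : 0 ≤ 1 - w^2 := by nlinarith
  have hK : 0 < k^2+5*k+5 := by positivity
  have h0 : (1-w^2)*((N+1)^2+(k^2+5*k+5)) ≤ (2*k+7)*(2*k+3)/2 := by linarith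
  have h1 : (N+k)^2*(k^2+5*k+5) ≤ ((N+1)^2+(k^2+5*k+5))*(k^2+5*k+5+(k-1)^2) := by
    have := sq_nonneg ((N+1)*(k-1)-(k^2+5*k+5))
    linarith
  have h2 := mul_le_mul_of_nonneg_left h1 hy
  have h3 := mul_le_mul_of_nonneg_right h0 (show 0 ≤ k^2+5*k+5+(k-1)^2 by positivity)
  have h4 : (2*k+7)*(2*k+3)/2*(k^2+5*k+5+(k-1)^2) ≤ 42/10*(k+1)^2*(k^2+5*k+5) := by
    obtain ⟨u, rfl⟩ : ∃ u, k = 3 + u := ⟨k-3, by ring⟩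
    have hu : 0 ≤ u := by linarith
    rw [← sub_nonneg]
    ring_nf
    positivity
  have : (1-w^2)*(N+k)^2*(k^2+5*k+5) ≤ 42/10*(k+1)^2*(k^2+5*k+5) := by linarith
  exact le_of_mul_le_mul_right this hK

lemma g_bound {N k : ℝ} (hk : 3 ≤ k) (hN : k+2 ≤ N) :
    (N^2+k)*((N+k+1)*(N+1-k)) ≤ (N^2-k^2)*((N+1)*(N+k)) := by
  obtain ⟨u, rfl⟩ : ∃ u, k = 3 + u := ⟨k-3, by ring⟩
  have hu : 0 ≤ u := by linarith
  obtain ⟨v, rfl⟩ : ∃ v, N = 5 + u + v := ⟨N-5-u, by ring⟩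
  have hv : 0 ≤ v := by linarith
  rw [← sub_nonneg]
  ring_nf
  positivity

/-- the algebraic part of case (v) -/
def Vpoly (k N m : ℝ) : Prop :=
  8*k*N^2*(m+4*k^2)*(N+k+1)*(20+13*(N-k))*(3*k+1) ≤
    50*(2*k+7)*(k+1)*(N-k)*(N+k)^2*(N+k-1)*(N+1)*((N-k)*(3*k+1) - (564/100*(N-k)+2*k))

set_option maxHeartbeats 1000000 in
lemma V1 {k N : ℝ} (hk : 4 ≤ k) (hN : 2*k ≤ N) : Vpoly k N (N^2) := by
  obtain ⟨u, rfl⟩ : ∃ u, k = 4 + u := ⟨k-4, by ring⟩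
  have hu : 0 ≤ u := by linarith
  obtain ⟨v, rfl⟩ : ∃ v, N = 2*(4 + u) + v := ⟨N-2*(4+u), by ring⟩
  have hv : 0 ≤ v := by linarith
  unfold Vpoly
  rw [← sub_nonneg]
  ring_nf
  positivity

lemma V2 {N : ℝ} (hN : 7 ≤ N) : Vpoly 3 N (N^2) := by
  obtain ⟨v, rfl⟩ : ∃ v, N = 7 + v := ⟨N-7, by ring⟩
  have hv : 0 ≤ v := by linarith
  unfold Vpoly
  rw [← sub_nonneg]
  ring_nf
  positivity

set_option maxHeartbeats 1000000 in
lemma V3 {k N : ℝ} (hN : k + 4 ≤ N) (hN2 : N ≤ 2*k) : Vpoly k N (4*k^2) := by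
  obtain ⟨u, rfl⟩ : ∃ u, N = 4 + k + u := ⟨N-4-k, by ring⟩
  have hu : 0 ≤ u := by linarith
  obtain ⟨v, rfl⟩ : ∃ v, k = 4 + u + v := ⟨k-4-u, by ring⟩
  have hv : 0 ≤ v := by linarith
  unfold Vpoly
  rw [← sub_nonneg]
  ring_nf
  positivity

lemma w_sq_le {w : ℝ} (hw0 : 0 ≤ w) (hw1 : w < 1) : w^2 ≤ w := by nlinarith

lemma w_sq4 {w : ℝ} (hw0 : 0 ≤ w) (hw1 : w < 1) : (1+w)^2 ≤ 4 := by nlinarith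

lemma w_half {w : ℝ} (hw0 : 0 ≤ w) (hw1 : w < 1) : w^2 ≤ 1/2*(1+w) := by nlinarith

lemma kk_bound {k : ℝ} (hk : 3 ≤ k) : k/(k+1)^2 ≤ 3/16 := by
  rw [div_le_div_iff₀ (by positivity) (by norm_num)]
  nlinarith

set_option maxHeartbeats 1000000 in
lemma caseV {N k w m : ℝ} (hk : 3 ≤ k) (hN : k + 4 ≤ N) (hw0 : 0 < w) (hw1 : w < 1)
    (I4 : 2*k+3 ≤ (1-w)*((N+1)^2-(k+1)^2))
    (I1 : (1-w^2)*(2*(N+1)^2-(2*k^2+10*k+11)) ≤ (2*k+7)*(2*k+3)*w^2)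
    (hm1 : N^2 ≤ m) (hm2 : 4*k^2 ≤ m) (hV : Vpoly k N m) : ParamOK N k w := by
  have hy : 0 < 1 - w^2 := by nlinarith
  have hq := w_half hw0.le hw1
  have hw3 : 3 ≤ (2*k+6)*w^2 := by
    have h1 : 3*(2*k+7) ≤ 2*(N+1)^2-(2*k^2+10*k+11) := by nlinarith
    have h2 := mul_le_mul_of_nonneg_left h1 hy.le
    have h3 : (2*k+7)*((1-w^2)*3) ≤ (2*k+7)*((2*k+3)*w^2) := by linarith
    have := le_of_mul_le_mul_left h3 (by linarith)
    linarith
  have hsq : (0:ℝ) < (1+w)^2 := by positivity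
  obtain ⟨A, hAdef⟩ : ∃ A, A = (2+(2*k+5)*w)/(1+w)^2 := ⟨_, rfl⟩
  have hA : A*(1+w)^2 = 2+(2*k+5)*w := by rw [hAdef]; field_simp
  have hA0 : 0 < A := by rw [hAdef]; positivity
  have hS := A_bound hk hw0.le hw1 hw3 hA hA0
  have hμ : 4 ≤ N - k := by linarith
  have hZ := Z_bound (by linarith) (by linarith) hw0.le hw1 (B_bound hk hw1 hw0.le I1)
    (D_bound (by linarith) (by linarith) hw0.le hw1 I4 hq (by norm_num))
  have hZ' : ((1-w^2)*(N+k)^2 + k*w^2) * (1/(k+1)^2 + 1/((N^2-k^2)*(1-w^2))) ≤ 564/100 + 2*k/(N-k) := by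
    refine hZ.trans ?_
    have a1 : (N+k)/(N-k) = 1 + 2*k/(N-k) := by
      have : N - k ≠ 0 := by linarith
      field_simp; ring
    have a2 : k/(k+1)^2*w^2 ≤ 3/16*1 := mul_le_mul (kk_bound hk) (by linarith) (sq_nonneg _) (by norm_num)
    rw [a1]; linarith
  have hs : 1 ≤ ((20+13*(N-k))/50)^2 := by
    have : 1 ≤ (20+13*(N-k))/50 := by linarith
    nlinarith
  have H2 := H2_bound (s := (20+13*(N-k))/50) (by linarith) (by linarith) hw0.le hw1 I4 hq hs (by
    obtain ⟨μ, rfl⟩ : ∃ μ, N = k + μ := ⟨N-k, by ring⟩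
    have h1 : (k+μ)-k = μ := by ring
    rw [h1] at hμ ⊢
    have a1 : μ^2 ≤ 15*(((20+13*μ)/50)^2-1) := by nlinarith
    have a2 : 15*(k+μ+k+2) ≤ 2*((2*k+3)*(k+μ+k)) := by nlinarith
    have a3 := mul_le_mul_of_nonneg_right a1 (show 0 ≤ k+μ+k+2 by linarith)
    have a5 : 0 ≤ ((20+13*μ)/50)^2-1 := by nlinarith
    have a4 := mul_le_mul_of_nonneg_left a2 a5
    linarith)
  have hE : ∀ x, 0 ≤ x → x ≤ w → N^2*x^2*(2*N^2+2*k^2-1) - (2*N^2+k-1)*(N^2-k^2) ≤ 4*k^2*N^2*w := by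
    intro x h1 h2
    refine (E_bound (by linarith) (by linarith) hw1 x h1 h2).trans ?_
    exact mul_le_mul_of_nonneg_left (w_sq_le hw0.le hw1) (by positivity)
  have H3 := e_bound (w := w) (by linarith) (by linarith) (by positivity) hE
    (m_bound (by linarith) (by linarith) hm1 hm2)
  have hm0 : 0 ≤ m := le_trans (sq_nonneg _) hm1
  have p1 : 0 < N - k := by linarith
  have p2 : 0 < N + k := by linarith
  have p3 : 0 < N + k - 1 := by linarith
  have p4 : 0 < N + 1 := by linarith
  have p5 : 0 < N + 1 - k := by linarith
  have p6 : 0 < k := by linarith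
  have hc : N^2-k^2 = (N-k)*(N+k) := by ring
  have hC : N^2-(k-1)^2 = (N+1-k)*(N+k-1) := by ring
  refine param_finish (s := (20+13*(N-k))/50) (κ := 4/(2*k+7)) (S := 3*k+1)
    (e0 := k*(4*k^2*N^2+N^2*m)/((N^2-k^2)^2*(N^2-(k-1)^2)))
    (G := k*N^2*(m+4*k^2)*((20+13*(N-k))/50)*(N+k+1)/(((N-k)*(N+k))^2*(N+k-1)*((k+1)*(N+1))))
    (by linarith) (by linarith) hw0.le hw1 (by positivity) hZ' (by positivity) H2 H3
    (g_bound hk (by linarith)) (by ring) (by positivity) ?_ ?_ hA hA0 (by linarith) hS ?_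
  · rw [hc, hC]
    apply le_of_eq
    field_simp
    ring
  · rw [div_mul_eq_mul_div, le_div_iff₀ (by linarith)]
    have a1 : (w*(2*k+7))*(1+w)^2 ≤ (4*A)*(1+w)^2 := by
      rw [mul_assoc 4 A, hA]
      have := w_sq4 hw0.le hw1
      have := mul_le_mul_of_nonneg_left this (show 0 ≤ w*(2*k+7) by positivity)
      linarith
    exact le_of_mul_le_mul_right a1 hsq
  · unfold Vpoly at hV
    have e1 : 564/100 + 2*k/(N-k) + 2*(4/(2*k+7))*(k*N^2*(m+4*k^2)*((20+13*(N-k))/50)*(N+k+1)/(((N-k)*(N+k))^2*(N+k-1)*((k+1)*(N+1))))*(3*k+1)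
      = (50*(2*k+7)*(k+1)*(N-k)*(N+k)^2*(N+k-1)*(N+1)*(564/100*(N-k)+2*k) + 8*k*N^2*(m+4*k^2)*(N+k+1)*(20+13*(N-k))*(3*k+1))
        /(50*(2*k+7)*(k+1)*(N-k)^2*(N+k)^2*(N+k-1)*(N+1)) := by
      field_simp
      ring
    rw [e1, div_le_iff₀ (by positivity)]
    linarith


lemma w3_bound {N k w : ℝ} (hk : 1 ≤ k) (hN : k + 3 ≤ N) (hw0 : 0 < w) (hw1 : w < 1)
    (I1 : (1-w^2)*(2*(N+1)^2-(2*k^2+10*k+11)) ≤ (2*k+7)*(2*k+3)*w^2) : 3 ≤ (2*k+6)*w^2 := by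
  have hy : 0 < 1 - w^2 := by nlinarith
  have h1 : 3*(2*k+7) ≤ 2*(N+1)^2-(2*k^2+10*k+11) := by nlinarith
  have h2 := mul_le_mul_of_nonneg_left h1 hy.le
  have h3 : (2*k+7)*((1-w^2)*3) ≤ (2*k+7)*((2*k+3)*w^2) := by linarith
  have := le_of_mul_le_mul_left h3 (by linarith)
  linarith

lemma w_iv {k w : ℝ} (hk : 3 ≤ k) (I4 : 2*k+3 ≤ (1-w)*((k+3+1)^2-(k+1)^2)) : w ≤ 8/11 := by
  by_contra h
  push Not at h
  nlinarith

lemma q_iv {w : ℝ} (hw0 : 0 < w) (h : w ≤ 8/11) : w^2 ≤ 64/209*(1+w) := by nlinarith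

set_option maxHeartbeats 1000000 in
lemma caseIV {k w : ℝ} (hk : 3 ≤ k) (hw0 : 0 < w) (hw1 : w < 1)
    (I4 : 2*k+3 ≤ (1-w)*((k+3+1)^2-(k+1)^2))
    (I1 : (1-w^2)*(2*(k+3+1)^2-(2*k^2+10*k+11)) ≤ (2*k+7)*(2*k+3)*w^2) : ParamOK (k+3) k w := by
  have hw3 := w3_bound (by linarith) le_rfl hw0 hw1 I1
  have hw8 := w_iv hk I4
  have hq := q_iv hw0 hw8
  have hsq : (0:ℝ) < (1+w)^2 := by positivity
  obtain ⟨A, hAdef⟩ : ∃ A, A = (2+(2*k+5)*w)/(1+w)^2 := ⟨_, rfl⟩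
  have hA : A*(1+w)^2 = 2+(2*k+5)*w := by rw [hAdef]; field_simp
  have hA0 : 0 < A := by rw [hAdef]; positivity
  have hS := A_bound hk hw0.le hw1 hw3 hA hA0
  have hZ := Z_bound (by linarith) (by linarith) hw0.le hw1 (B_bound hk hw1 hw0.le I1)
    (D_bound (by linarith) (by linarith) hw0.le hw1 I4 hq (by norm_num))
  have hw2 : w^2 ≤ (8/11)^2 := pow_le_pow_left₀ hw0.le hw8 2
  have hZ' : ((1-w^2)*(k+3+k)^2 + k*w^2) * (1/(k+1)^2 + 1/(((k+3)^2-k^2)*(1-w^2))) ≤ 546/100 + 2*k/3 := by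
    refine hZ.trans ?_
    have a1 : (k+3+k)/(k+3-k) = 1 + 2*k/3 := by
      have : k + 3 - k = 3 := by ring
      rw [this]; ring
    have a2 : k/(k+1)^2*w^2 ≤ 3/16*(8/11)^2 := mul_le_mul (kk_bound hk) hw2 (sq_nonneg _) (by norm_num)
    rw [a1]; linarith
  have hk3 : 0 < 2*k+3 := by linarith
  have hs : 1 ≤ (1+169/100/(2*k+3))^2 := one_le_pow₀ (le_add_of_nonneg_right (by positivity))
  have H2 := H2_bound (s := 1+169/100/(2*k+3)) (by linarith) (by linarith) hw0.le hw1 I4 hq hs (by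
    have h1 : 338/100 ≤ ((1+169/100/(2*k+3))^2-1)*(2*k+3) := by
      have : ((1+169/100/(2*k+3))^2-1)*(2*k+3) = 338/100 + (169/100)^2/(2*k+3) := by
        field_simp; ring
      rw [this]
      exact le_add_of_nonneg_right (by positivity)
    have h2 := mul_le_mul_of_nonneg_right h1 (show 0 ≤ k+3+k by linarith)
    have h3 : k+3-k = 3 := by ring
    rw [h3]
    linarith)
  have hE : ∀ x, 0 ≤ x → x ≤ w → (k+3)^2*x^2*(2*(k+3)^2+2*k^2-1) - (2*(k+3)^2+k-1)*((k+3)^2-k^2) ≤ 4*k^2*(k+3)^2*(8/11)*w := by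
    intro x h1 h2
    refine (E_bound (by linarith) (by linarith) hw1 x h1 h2).trans ?_
    rw [mul_assoc (4*k^2*(k+3)^2)]
    apply mul_le_mul_of_nonneg_left _ (by positivity)
    rw [sq]
    exact mul_le_mul_of_nonneg_right hw8 hw0.le
  have hm1 : (k+3)^2 ≤ 4*k^2 := by
    have : (k+3)^2 ≤ (2*k)^2 := pow_le_pow_left₀ (by linarith) (by linarith) 2
    linarith
  have H3 := e_bound (N := k+3) (w := w) (by linarith) (by linarith) (by positivity) hE
    (m_bound (by linarith) (by linarith) hm1 le_rfl)
  have p6 : 0 < k := by linarith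
  have hc : (k+3)^2-k^2 = 3*(2*k+3) := by ring
  have hC : (k+3)^2-(k-1)^2 = 4*(2*k+2) := by ring
  have hp : k+3+1-k = 4 := by ring
  refine param_finish (s := 1+169/100/(2*k+3)) (κ := 361/121/(2*k+31/4)) (S := 3*k+1)
    (e0 := k*(4*k^2*(k+3)^2*(8/11)+(k+3)^2*(4*k^2))/(((k+3)^2-k^2)^2*((k+3)^2-(k-1)^2)))
    (G := k*(k+3)^2*(4*k^2*(19/11))*((2*k+469/100)/(2*k+3))*(2*k+4)/(9*(2*k+3)^2*(2*k+2)*((k+1)*(k+4))))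
    (by linarith) (by linarith) hw0.le hw1 (by positivity) hZ' (by positivity) H2 H3
    (g_bound hk (by linarith)) (by ring) (by positivity) ?_ ?_ hA hA0 (by linarith) hS ?_
  · rw [hc, hC, hp]
    apply le_of_eq
    field_simp
    ring
  · rw [div_mul_eq_mul_div, le_div_iff₀ (by linarith)]
    have a1 : (w*(2*k+31/4))*(1+w)^2 ≤ (361/121*A)*(1+w)^2 := by
      rw [mul_assoc _ A, hA]
      have : (1+w)^2 ≤ (19/11)^2 := pow_le_pow_left₀ (by linarith) (by linarith) 2
      have := mul_le_mul_of_nonneg_left this (show 0 ≤ w*(2*k+31/4) by positivity)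
      linarith
    exact le_of_mul_le_mul_right a1 hsq
  · have e1 : 546/100 + 2*k/3 + 2*(361/121/(2*k+31/4))*(k*(k+3)^2*(4*k^2*(19/11))*((2*k+469/100)/(2*k+3))*(2*k+4)/(9*(2*k+3)^2*(2*k+2)*((k+1)*(k+4))))*(3*k+1)
      = (546/100 + 2*k/3) + (2*(361/121)*4*k^3*(k+3)^2*(19/11)*(2*k+4)*(2*k+469/100))*(3*k+1)/((2*k+31/4)*9*(2*k+3)^3*(2*k+2)*(k+1)*(k+4)) := by
      field_simp
    rw [e1, ← le_sub_iff_add_le', div_le_iff₀ (by positivity)]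
    obtain ⟨u, rfl⟩ : ∃ u, k = 3 + u := ⟨k-3, by ring⟩
    have hu : 0 ≤ u := by linarith
    clear * - hu
    rw [← sub_nonneg]
    ring_nf
    positivity

set_option maxHeartbeats 1000000 in
lemma caseII {k w : ℝ} (hk : 3 ≤ k) (hw0 : 0 < w) (hw1 : w < 1) (hw : (2*k+4)*w^2 = 1) : ParamOK (k+2) k w := by
  have hk4 : 0 < 2*k+4 := by linarith
  have hA : (2*k+4)*w*(1+w)^2 = 2+(2*k+5)*w := by
    have : (2*k+4)*w*(1+w)^2 = (2*k+4)*w + 2*((2*k+4)*w^2) + ((2*k+4)*w^2)*w := by ring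
    rw [this, hw]; ring
  have hA0 : 0 < (2*k+4)*w := by positivity
  have hS : 2*k+4 ≤ ((2*k+4)*w)^2 := by
    have : ((2*k+4)*w)^2 = (2*k+4)*((2*k+4)*w^2) := by ring
    rw [this, hw, mul_one]
  have hw2 : w^2 = 1/(2*k+4) := by field_simp; linarith
  have hyk : 1 - w^2 = (2*k+3)/(2*k+4) := by rw [hw2]; field_simp; ring
  have hZ' : ((1-w^2)*(k+2+k)^2 + k*w^2) * (1/(k+1)^2 + 1/(((k+2)^2-k^2)*(1-w^2))) ≤ k + 5 := by
    have hc : (k+2)^2-k^2 = 4*(k+1) := by ring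
    have e : ((1-w^2)*(k+2+k)^2 + k*w^2) * (1/(k+1)^2 + 1/(((k+2)^2-k^2)*(1-w^2)))
       = ((2*k+3)*(2*k+2)^2+k)*(4*(2*k+3)+(2*k+4)*(k+1))/((2*k+4)*(4*(k+1)^2*(2*k+3))) := by
      rw [hyk, hw2, hc]
      have : k+1 ≠ 0 := by linarith
      have : 2*k+3 ≠ 0 := by linarith
      field_simp
      ring
    rw [e, div_le_iff₀ (by positivity)]
    obtain ⟨u, rfl⟩ : ∃ u, k = 3 + u := ⟨k-3, by ring⟩
    have hu : 0 ≤ u := by linarith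
    clear * - hu
    rw [← sub_nonneg]
    ring_nf
    positivity
  have H2 : (k+2-k)*w^2 ≤ ((1+1/(2*(k+1)*(2*k+3)))^2-1)*((k+2+k)*(1-w^2)) := by
    rw [hyk, hw2]
    have e : ((1+1/(2*(k+1)*(2*k+3)))^2-1)*((k+2+k)*((2*k+3)/(2*k+4)))
      = (k+2-k)*(1/(2*k+4)) + 1/(2*(k+1)*(2*k+3)*(2*k+4)) := by
      have : k+1 ≠ 0 := by linarith
      have : 2*k+3 ≠ 0 := by linarith
      field_simp
      ring
    rw [e]
    exact le_add_of_nonneg_right (by positivity)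
  have hE : ∀ x, 0 ≤ x → x ≤ w → (k+2)^2*x^2*(2*(k+2)^2+2*k^2-1) - (2*(k+2)^2+k-1)*((k+2)^2-k^2) ≤ 0 := by
    intro x h1 h2
    have h3 : x^2 ≤ 1/(2*k+4) := by rw [← hw2]; exact pow_le_pow_left₀ h1 h2 2
    have h4 := mul_le_mul_of_nonneg_left h3 (show 0 ≤ (k+2)^2*(2*(k+2)^2+2*k^2-1) from
      mul_nonneg (sq_nonneg _) (by nlinarith))
    have e : (k+2)^2*(2*(k+2)^2+2*k^2-1)*(1/(2*k+4)) = (k+2)*(2*(k+2)^2+2*k^2-1)/2 := by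
      field_simp
      ring
    rw [e] at h4
    have h5 : (k+2)*(2*(k+2)^2+2*k^2-1)/2 ≤ (2*(k+2)^2+k-1)*((k+2)^2-k^2) := by
      obtain ⟨u, rfl⟩ : ∃ u, k = 3 + u := ⟨k-3, by ring⟩
      have hu : 0 ≤ u := by linarith
      clear * - hu
      rw [← sub_nonneg]
      ring_nf
      positivity
    linarith
  have hm1 : (k+2)^2 ≤ 4*k^2 := by
    have : (k+2)^2 ≤ (2*k)^2 := pow_le_pow_left₀ (by linarith) (by linarith) 2
    linarith
  have H3 := e_bound (N := k+2) (w := w) (by linarith) (by linarith) le_rfl hE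
    (m_bound (by linarith) (by linarith) hm1 le_rfl)
  have p6 : 0 < k := by linarith
  have hc : (k+2)^2-k^2 = 4*(k+1) := by ring
  have hC : (k+2)^2-(k-1)^2 = 3*(2*k+1) := by ring
  have hp : k+2+1-k = 3 := by ring
  refine param_finish (s := 1+1/(2*(k+1)*(2*k+3))) (κ := 1/(2*k+4)) (S := 2*k+4)
    (e0 := k*((k+2)^2*(4*k^2))/(((k+2)^2-k^2)^2*((k+2)^2-(k-1)^2)))
    (G := k*((k+2)^2*(4*k^2))*(1+1/(2*(k+1)*(2*k+3)))*(2*k+3)/((4*(k+1))^2*(2*k+1)*((k+1)*(k+3))))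
    (by linarith) (by linarith) hw0.le hw1 (by positivity) hZ' (by positivity) H2 H3
    (g_bound hk (by linarith)) (by ring) (by positivity) ?_ ?_ hA hA0 (by linarith) hS ?_
  · rw [hc, hC, hp]
    apply le_of_eq
    field_simp
    ring
  · apply le_of_eq
    field_simp
  · have e1 : k + 5 + 2*(1/(2*k+4))*(k*((k+2)^2*(4*k^2))*(1+1/(2*(k+1)*(2*k+3)))*(2*k+3)/((4*(k+1))^2*(2*k+1)*((k+1)*(k+3))))*(2*k+4)
      = (k + 5) + (2*(k+1)*(2*k+3)+1)*k^3*(k+2)^2/(4*(k+1)^4*(2*k+1)*(k+3)) := by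
      field_simp
    rw [e1, ← le_sub_iff_add_le', div_le_iff₀ (by positivity)]
    obtain ⟨u, rfl⟩ : ∃ u, k = 3 + u := ⟨k-3, by ring⟩
    have hu : 0 ≤ u := by linarith
    clear * - hu
    rw [← sub_nonneg]
    ring_nf
    positivity


lemma E_III {N w : ℝ} (hN : 5 ≤ N) (hw0 : 0 < w)
    (I4 : 2*2+3 ≤ (1-w)*((N+1)^2-(2+1)^2)) :
    ∀ x, 0 ≤ x → x ≤ w → N^2*x^2*(2*N^2+2*2^2-1) - (2*N^2+2-1)*(N^2-2^2) ≤ 0 := by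
  intro x h1 h2
  have hQ : 0 < (N-2)*(N+4) := mul_pos (by linarith) (by linarith)
  have h3 : ((N-2)*(N+4))*w ≤ (N-3)*(N+5) := by linarith
  have h4 : (((N-2)*(N+4))*x)^2 ≤ ((N-3)*(N+5))^2 :=
    pow_le_pow_left₀ (mul_nonneg hQ.le h1) ((mul_le_mul_of_nonneg_left h2 hQ.le).trans h3) 2
  have h5 := mul_le_mul_of_nonneg_left h4 (show 0 ≤ N^2*(2*N^2+7) by positivity)
  have h6 : N^2*(2*N^2+7)*((N-3)*(N+5))^2 ≤ (2*N^2+1)*(N^2-4)*((N-2)*(N+4))^2 := by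
    obtain ⟨u, rfl⟩ : ∃ u, N = 5 + u := ⟨N-5, by ring⟩
    have hu : 0 ≤ u := by linarith
    clear * - hu
    rw [← sub_nonneg]
    ring_nf
    positivity
  have h7 : N^2*x^2*(2*N^2+7)*((N-2)*(N+4))^2 ≤ (2*N^2+1)*(N^2-4)*((N-2)*(N+4))^2 := by linarith
  have h8 := le_of_mul_le_mul_right h7 (by positivity)
  linarith

lemma B_III {N w : ℝ} (I1 : (1-w^2)*(2*(N+1)^2-(2*2^2+10*2+11)) ≤ (2*2+7)*(2*2+3)*w^2) :
    (1-w^2)*(N+2)^2 ≤ 77*(N+2)^2/(18*((N+1)^2+19))*(2+1)^2 := by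
  have h0 : (1-w^2)*((N+1)^2+19) ≤ 77/2 := by linarith
  have h1 : 1-w^2 ≤ 77/2/((N+1)^2+19) := by rw [le_div_iff₀ (by positivity)]; exact h0
  have h2 := mul_le_mul_of_nonneg_right h1 (sq_nonneg (N+2))
  refine h2.trans (le_of_eq ?_)
  have : (N+1)^2+19 ≠ 0 := by positivity
  field_simp
  ring

set_option maxHeartbeats 1000000 in
lemma fin_III {N : ℝ} (hN : 5 ≤ N) : 77*(N+2)^2/(18*((N+1)^2+19)) + (N+2)/(N-2) + 2/9 + 1/4
    + 2*(4/11)*(2*(N^4-20*N^2-8)*((27*(N-1)+28)/100)*(N+3)/((N^2-4)^2*(N+1)*(3*(N+1))))*(121/16) ≤ 121/16 := by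
  have p1 : 0 < N - 2 := by linarith
  have p2 : 0 < N + 2 := by linarith
  have p3 : 0 < N + 1 := by linarith
  have hc : N^2-4 = (N-2)*(N+2) := by ring
  rw [hc]
  have e : 77*(N+2)^2/(18*((N+1)^2+19)) + (N+2)/(N-2) + 2/9 + 1/4
    + 2*(4/11)*(2*(N^4-20*N^2-8)*((27*(N-1)+28)/100)*(N+3)/(((N-2)*(N+2))^2*(N+1)*(3*(N+1))))*(121/16)
    = 2/9 + 1/4 + (77*(N+2)^2*(3*(N-2)^2*(N+2)^2*(N+1)^2) + (18*((N+1)^2+19))*(3*(N-2)*(N+2)^3*(N+1)^2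
      + 11/2*(2*(N^4-20*N^2-8)*((27*(N-1)+28)/100)*(N+3))))/(18*((N+1)^2+19)*(3*(N-2)^2*(N+2)^2*(N+1)^2)) := by
    field_simp
    ring
  rw [e, ← le_sub_iff_add_le', div_le_iff₀ (by positivity)]
  obtain ⟨u, rfl⟩ : ∃ u, N = 5 + u := ⟨N-5, by ring⟩
  have hu : 0 ≤ u := by linarith
  clear * - hu
  rw [← sub_nonneg]
  ring_nf
  positivity

set_option maxHeartbeats 1000000 in
lemma caseIII {N w : ℝ} (hN : 5 ≤ N) (hw0 : 0 < w) (hw1 : w < 1)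
    (I4 : 2*2+3 ≤ (1-w)*((N+1)^2-(2+1)^2))
    (I1 : (1-w^2)*(2*(N+1)^2-(2*2^2+10*2+11)) ≤ (2*2+7)*(2*2+3)*w^2) : ParamOK N 2 w := by
  have hw3 := w3_bound (by norm_num) (by linarith) hw0 hw1 I1
  have hw27 : 3/11 ≤ w := by
    by_contra h
    push Not at h
    nlinarith
  have hq := w_half hw0.le hw1
  have hsq : (0:ℝ) < (1+w)^2 := by positivity
  obtain ⟨A, hAdef⟩ : ∃ A, A = (2+(2*2+5)*w)/(1+w)^2 := ⟨_, rfl⟩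
  have hA : A*(1+w)^2 = 2+(2*2+5)*w := by rw [hAdef]; field_simp
  have hA0 : 0 < A := by rw [hAdef]; positivity
  have hA1 : 11/4 ≤ A := by
    have : 11/4*(1+w)^2 ≤ A*(1+w)^2 := by
      rw [hA]
      have := mul_nonneg (show 0 ≤ w - 3/11 by linarith) (show 0 ≤ 1 - w by linarith)
      linarith
    exact le_of_mul_le_mul_right this hsq
  have hS : 121/16 ≤ A^2 := by
    have := pow_le_pow_left₀ (by norm_num) hA1 2
    linarith
  have hZ := Z_bound (by norm_num) (by linarith) hw0.le hw1 (B_III I1)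
    (D_bound (by norm_num) (by linarith) hw0.le hw1 I4 hq (by norm_num))
  have hZ' : ((1-w^2)*(N+2)^2 + 2*w^2) * (1/(2+1)^2 + 1/((N^2-2^2)*(1-w^2))) ≤ 77*(N+2)^2/(18*((N+1)^2+19)) + (N+2)/(N-2) + 2/9 + 1/4 := by
    refine hZ.trans ?_
    have := w_sq_le hw0.le hw1
    linarith
  have p1 : 0 < N - 2 := by linarith
  have p2 : 0 < N + 2 := by linarith
  have p3 : 0 < N + 1 := by linarith
  have p4 : 0 < N - 1 := by linarith
  have hnum : 0 ≤ N^4-20*N^2-8 := by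
    have : 25 ≤ N^2 := by nlinarith
    nlinarith
  have hs : 1 ≤ ((27*(N-1)+28)/100)^2 := by
    apply one_le_pow₀; linarith
  have H2 := H2_bound (s := (27*(N-1)+28)/100) (by norm_num) (by linarith) hw0.le hw1 I4 hq hs (by
    obtain ⟨u, rfl⟩ : ∃ u, N = 5 + u := ⟨N-5, by ring⟩
    have hu : 0 ≤ u := by linarith
    clear * - hu
    rw [← sub_nonneg]
    ring_nf
    positivity)
  have hm : |(-N^4+5*2^2*N^2+2*2^2*(2-1))| ≤ N^4-20*N^2-8 := by
    rw [abs_le]; constructor <;> linarith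
  have H3 := e_bound (w := w) (by norm_num) (by linarith) le_rfl (E_III hN hw0 I4) hm
  have hc : N^2-2^2 = N^2-4 := by ring
  have hC : N^2-(2-1)^2 = (N-1)*(N+1) := by ring
  have hp : N+1-2 = N-1 := by ring
  have hc0 : 0 < N^2-4 := by nlinarith
  refine param_finish (s := (27*(N-1)+28)/100) (κ := 4/11) (S := 121/16)
    (e0 := 2*(N^4-20*N^2-8)/((N^2-2^2)^2*(N^2-(2-1)^2)))
    (G := 2*(N^4-20*N^2-8)*((27*(N-1)+28)/100)*(N+3)/((N^2-4)^2*(N+1)*(3*(N+1))))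
    (by norm_num) (by linarith) hw0.le hw1 (by positivity) hZ' (by positivity) H2 H3
    ?_ (by ring) (by positivity) ?_ ?_ hA hA0 (by norm_num) hS (fin_III hN)
  · obtain ⟨u, rfl⟩ : ∃ u, N = 5 + u := ⟨N-5, by ring⟩
    have hu : 0 ≤ u := by linarith
    clear * - hu
    rw [← sub_nonneg]
    ring_nf
    positivity
  · rw [hc, hC, hp]
    apply le_of_eq
    field_simp
    ring
  · linarith

lemma caseI {w : ℝ} (hw0 : 0 < w) (hw : 8*w^2 = 1) : ParamOK 4 2 w := by
  have hw2 : w^2 = 1/8 := by linarith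
  have hwa : 353/1000 ≤ w := by
    apply le_of_sq_le_sq_aux ?_ hw0.le
    rw [hw2]; norm_num
  have hwb : w ≤ 354/1000 := by
    apply le_of_sq_le_sq_aux ?_ (by norm_num)
    rw [hw2]; norm_num
  have H3 := e_bound (N := 4) (k := 2) (w := w) (E := 0) (m := 96) (by norm_num) (by norm_num) le_rfl (by
    intro x h1 h2
    have : x^2 ≤ 1/8 := by rw [← hw2]; exact pow_le_pow_left₀ h1 h2 2
    linarith) (by rw [abs_le]; constructor <;> norm_num)
  refine ⟨256/100, 103/100, _, by norm_num, by norm_num, ?_, ?_, H3, ?_, ?_⟩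
  · rw [hw2]; norm_num
  · rw [hw2]; norm_num
  · have e : (1+w)^2 = 1 + 2*w + w^2 := by ring
    rw [e, hw2]
    norm_num
    nlinarith
  · have e : (1+w)^2 = 1 + 2*w + w^2 := by ring
    rw [e, hw2]
    linarith


lemma param_exists {N j : ℕ} (hj : 1 ≤ j) (hN : j + 3 ≤ N) {w : ℝ} (hw0 : 0 < w) (hw1 : w < 1)
    (k n : ℝ) (hk : k = j + 1) (hn : n = N)
    (I4 : 2*k+3 ≤ (1-w)*((n+1)^2-(k+1)^2))
    (I3 : N = j + 3 → (2*k+4)*w^2 = 1)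
    (I1 : (1-w^2)*(2*(n+1)^2-(2*k^2+10*k+11)) ≤ (2*k+7)*(2*k+3)*w^2) : ParamOK n k w := by
  rcases Nat.lt_or_ge j 2 with h | h
  · obtain rfl : j = 1 := by omega
    obtain rfl : k = 2 := by rw [hk]; norm_num
    rcases Nat.lt_or_ge N 5 with h5 | h5
    · obtain rfl : N = 4 := by omega
      obtain rfl : n = 4 := by rw [hn]; norm_num
      exact caseI hw0 (by have := I3 rfl; linarith)
    · have : (5:ℝ) ≤ n := by rw [hn]; exact_mod_cast h5
      exact caseIII this hw0 hw1 I4 I1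
  · have hk3 : (3:ℝ) ≤ k := by
      have : (2:ℝ) ≤ j := by exact_mod_cast h
      linarith
    rcases Nat.lt_or_ge N (j+5) with h5 | h5
    · rcases Nat.lt_or_ge N (j+4) with h4 | h4
      · obtain rfl : N = j + 3 := by omega
        obtain rfl : n = k + 2 := by rw [hn, hk]; push_cast; ring
        exact caseII hk3 hw0 hw1 (I3 rfl)
      · obtain rfl : N = j + 4 := by omega
        obtain rfl : n = k + 3 := by rw [hn, hk]; push_cast; ring
        exact caseIV hk3 hw0 hw1 I4 I1
    · have hn4 : k + 4 ≤ n := by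
        have : (j:ℝ) + 5 ≤ N := by exact_mod_cast h5
        linarith
      rcases le_total (2*k) n with h2 | h2
      · have hm2 : 4*k^2 ≤ n^2 := by
          have := pow_le_pow_left₀ (show 0 ≤ 2*k by linarith) h2 2
          linarith
        refine caseV hk3 hn4 hw0 hw1 I4 I1 le_rfl hm2 ?_
        rcases Nat.lt_or_ge j 3 with h3 | h3
        · obtain rfl : j = 2 := by omega
          obtain rfl : k = 3 := by rw [hk]; norm_num
          exact V2 (by linarith)
        · have : (3:ℝ) ≤ j := by exact_mod_cast h3
          exact V1 (by linarith) h2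
      · have hm1 : n^2 ≤ 4*k^2 := by
          have := pow_le_pow_left₀ (show 0 ≤ n by linarith) h2 2
          linarith
        exact caseV hk3 hn4 hw0 hw1 I4 I1 hm1 le_rfl (V3 hn4 h2)

lemma C1_scalar {n k M Mn r τ f w : ℝ} (hk : 1 ≤ k) (hn : k + 1 ≤ n) (hM : 0 < M) (hr : 0 ≤ r) (hτ : 0 ≤ τ)
    (hw0 : 0 ≤ w) (hw1 : w < 1)
    (hI2 : r * (2*k+1) * (2 + (2*k+5)*w) ≤ 2 * (1+w)^2)
    (hMn : Mn * (n * (n+1-k)) = M * ((n+1)*(n+k)))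
    (hf : f ≤ ((n+1-k)/(n+1) + k/(n+1)*τ) * (r*Mn)) :
    f ≤ (n+k)/n/(2*k+1)*M + (2/n*τ)*((k+1)*((n+1)*(n+k)/((n+k+1)*(n+1-k)))/(2*k+1)*M) := by
  have p1 : 0 < n := by linarith
  have p2 : 0 < n + 1 := by linarith
  have p3 : 0 < n + 1 - k := by linarith
  have p4 : 0 < n + k + 1 := by linarith
  have p5 : 0 < 2*k+1 := by linarith
  have p6 : 0 < n + k := by linarith
  have hMn' : Mn = M * ((n+1)*(n+k))/(n * (n+1-k)) := by
    rw [eq_div_iff (by positivity)]; exact hMn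
  have hMn0 : 0 < Mn := by rw [hMn']; positivity
  have hr1 : r ≤ 1/(2*k+1) := by
    rw [le_div_iff₀ p5]
    have hX : 0 < 2 + (2*k+5)*w := by positivity
    have : r*(2*k+1)*(2+(2*k+5)*w) ≤ 1*(2+(2*k+5)*w) := by
      have := w_sq_le hw0 hw1
      have : 0 ≤ (k-1)*w := mul_nonneg (by linarith) hw0
      linarith
    exact le_of_mul_le_mul_right this hX
  have h1 : ((n+1-k)/(n+1) + k/(n+1)*τ) * (r*Mn) ≤ ((n+1-k)/(n+1) + k/(n+1)*τ) * (1/(2*k+1)*Mn) := by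
    apply mul_le_mul_of_nonneg_left _ (by positivity)
    exact mul_le_mul_of_nonneg_right hr1 hMn0.le
  refine hf.trans (h1.trans ?_)
  have e1 : ((n+1-k)/(n+1) + k/(n+1)*τ) * (1/(2*k+1)*Mn)
    = (n+k)/n/(2*k+1)*M + (2/n*τ)*((k/2*(n+k+1)/(n+1))*((n+1)*(n+k)/((n+k+1)*(n+1-k)))/(2*k+1)*M) := by
    rw [hMn']
    field_simp
  rw [e1]
  have h2 : k/2*(n+k+1)/(n+1) ≤ k+1 := by
    rw [div_le_iff₀ p2]
    nlinarith
  gcongr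

/-- `C1` estimate at the point `ω` -/
lemma C1_at {N j : ℕ} (hkn : j + 2 ≤ N) {w : ℝ} (hw0 : 0 ≤ w)
    (hw : IsGreatest {x : ℝ | dv (Chebyshev.T ℝ ((N+1:ℕ):ℤ)) (j+2) x = 0} w)
    {σ : ℝ} (hσ : 0 ≤ σ) {F : ℕ → ℝ → ℝ} (hF : WChain (N+1) σ F)
    (n k M l : ℝ) (hn : n = N) (hk : k = j + 1)
    (hM : M = dv (Chebyshev.T ℝ (N:ℤ)) (j+1) 1) (hl : l = 2/n*(σ/sigmaN (N+1))) :
    |F (j+1) w| ≤ (n+k)/n/(2*k+1)*M + l*((k+1)*((n+1)*(n+k)/((n+k+1)*(n+1-k)))/(2*k+1)*M) := by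
  obtain ⟨r, hr, hw1, h1, h3, -, -, hI2, -, -, -, -⟩ := omega_facts hkn hw0 hw n k M hn hk hM
  have hM0 : 0 < M := by rw [hM]; exact cheb_one_pos _ _ (by omega)
  have hb := bound_C1 (n := N+1) (j := j) (by omega) hF ⟨by linarith, hw1⟩ hw.1
  rw [abs_of_pos h3, ← mul_assoc] at hb
  have hb' := le_of_mul_le_mul_right hb h3
  have hr' := cheb_M_ratio N (j+1) (by omega)
  have hkn' : (j:ℝ) + 2 ≤ N := by exact_mod_cast hkn
  have hj0 : (0:ℝ) ≤ j := Nat.cast_nonneg _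
  rw [hl]
  refine C1_scalar (w := w) (r := r) (Mn := dv (Chebyshev.T ℝ ((N+1:ℕ):ℤ)) (j+1) 1) (by linarith) (by linarith) hM0 hr
    (div_nonneg hσ (sigmaN_pos _).le) hw0 hw1 hI2 ?_ ?_
  · rw [hn, hk, hM]; push_cast at hr' ⊢; exact hr'
  · refine hb'.trans (le_of_eq ?_)
    rw [h1, hn, hk]; push_cast; ring

lemma crit_bound {N j : ℕ} (hj : 1 ≤ j) (hkn : j + 3 ≤ N) {w : ℝ} (hw0 : 0 ≤ w)
    (hw : IsGreatest {x : ℝ | dv (Chebyshev.T ℝ ((N+1:ℕ):ℤ)) (j+2) x = 0} w)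
    {σ : ℝ} (hσ : 0 ≤ σ) {F : ℕ → ℝ → ℝ} (hF : WChain (N+1) σ F)
    (n k M l : ℝ) (hn : n = N) (hk : k = j + 1)
    (hM : M = dv (Chebyshev.T ℝ (N:ℤ)) (j+1) 1) (hl : l = 2/n*(σ/sigmaN (N+1)))
    {x : ℝ} (hx0 : 0 ≤ x) (hxw : x ≤ w) (hz : F (j+2) x = 0) :
    |F (j+1) x| ≤ 3/(2*k+1)*M + l*(2*(k+1)*((n+1)*(n+k)/((n+k+1)*(n+1-k)))/(2*k+1)*M) := by
  have hkn2 : j + 2 ≤ N := by omega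
  obtain ⟨r, hr, hw1, h1, h3, ha, hb, hI2, I4, -, I3, I1⟩ := omega_facts hkn2 hw0 hw n k M hn hk hM
  obtain ⟨hwp, I1⟩ := I1 hkn
  have hM0 : 0 < M := by rw [hM]; exact cheb_one_pos _ _ (by omega)
  obtain ⟨z, s, e, hz0, hs0, H1, H2, H3, H4, H5⟩ := param_exists hj hkn hwp hw1 k n hk hn I4 I3 I1
  have hxI : x ∈ Ioo (-1:ℝ) 1 := ⟨by linarith, by linarith⟩
  obtain ⟨c1, c2⟩ := bound_comb hkn2 hF hxI hz _ _ k n rfl rfl hk hn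
  have hmono := mono_facts hkn2 hx0 hxw hw1
  simp only [← hk, ← hn] at hmono
  rw [ha, hb] at hmono
  obtain ⟨m1, m2⟩ := hmono
  have hkn' : (j:ℝ) + 3 ≤ N := by exact_mod_cast hkn
  have hj0 : (1:ℝ) ≤ j := by exact_mod_cast hj
  have hk1 : 1 ≤ k := by linarith
  have hnk : k + 1 ≤ n := by linarith
  have hTh := Th_nonneg hkn2 hxI
  rw [← hk, ← hn] at hTh
  rw [← hl] at c1 c2
  have hn0 : 0 < n := by linarith
  refine scalar_core (x := x) (w := w) (r := r) hk1 hnk hx0 hxw hw1 hr hM0 ?_ hI2 hTh ?_ ?_ ?_ c1 c2 hz0 hs0 H1 H2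
    (H3 x hx0 hxw).1 (H3 x hx0 hxw).2 H4 H5
  · rw [hl]; exact mul_nonneg (by positivity) (div_nonneg hσ (sigmaN_pos _).le)
  · have : 0 ≤ k * (dv (Chebyshev.T ℝ (N:ℤ)) (j+1) x)^2 := by positivity
    have e : (1 - w^2) * Th n k w (-w*r*M) (r*M*(n+k)) + k*(-w*r*M)^2 = r^2*M^2*((1-w^2)*(n+k)^2 + k*w^2) := by
      unfold Th; ring
    linarith
  · have : 0 ≤ (n^2-k^2) * (dv (Chebyshev.T ℝ (N:ℤ)) (j+1) x)^2 := by
      apply mul_nonneg _ (sq_nonneg _)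
      have : 0 ≤ (n-k)*(n+k) := mul_nonneg (by linarith) (by linarith)
      linarith
    have e : (n^2-k^2)*(-w*r*M)^2 + (1-w^2)*(r*M*(n+k))^2 = r^2*M^2*((n^2-k^2)*w^2 + (1-w^2)*(n+k)^2) := by ring
    linarith
  · rintro ⟨h0, h1⟩
    exact cheb_no_double N hxI (j+1) (by omega) h0 h1

lemma main_bound {N j : ℕ} (hkn : j + 2 ≤ N) {w : ℝ}
    (hw : IsGreatest {x : ℝ | dv (Chebyshev.T ℝ ((N+1:ℕ):ℤ)) (j+2) x = 0} w)
    {σ : ℝ} (hσ : 0 ≤ σ) {F : ℕ → ℝ → ℝ} (hF : WChain (N+1) σ F)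
    (n k M l : ℝ) (hn : n = N) (hk : k = j + 1)
    (hM : M = dv (Chebyshev.T ℝ (N:ℤ)) (j+1) 1) (hl : l = 2/n*(σ/sigmaN (N+1)))
    {x : ℝ} (hx0 : 0 ≤ x) (hxw : x ≤ w) :
    |F (j+1) x| ≤ 3/(2*k+1)*M + l*(2*(k+1)*((n+1)*(n+k)/((n+k+1)*(n+1-k)))/(2*k+1)*M) := by
  have hw0 : 0 ≤ w := hx0.trans hxw
  have hM0 : 0 < M := by rw [hM]; exact cheb_one_pos _ _ (by omega)
  obtain ⟨r, hr, hw1, -, -, -, -, -, -, I0, -, -⟩ := omega_facts hkn hw0 hw n k M hn hk hM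
  have hkn' : (j:ℝ) + 2 ≤ N := by exact_mod_cast hkn
  have hj0 : (0:ℝ) ≤ j := Nat.cast_nonneg _
  have hk1 : 1 ≤ k := by linarith
  have hnk : k + 1 ≤ n := by linarith
  have hn0 : 0 < n := by linarith
  have hp : 0 < n + 1 - k := by linarith
  have hl0 : 0 ≤ l := by rw [hl]; exact mul_nonneg (by positivity) (div_nonneg hσ (sigmaN_pos _).le)
  obtain ⟨Y, hY⟩ : ∃ Y, Y = l*((k+1)*((n+1)*(n+k)/((n+k+1)*(n+1-k)))/(2*k+1)*M) := ⟨_, rfl⟩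
  have hY0 : 0 ≤ Y := by rw [hY]; positivity
  have eY : l*(2*(k+1)*((n+1)*(n+k)/((n+k+1)*(n+1-k)))/(2*k+1)*M) = 2*Y := by rw [hY]; ring
  have hC1 : ∀ G : ℕ → ℝ → ℝ, WChain (N+1) σ G → |G (j+1) w| ≤ (n+k)/n/(2*k+1)*M + Y := by
    intro G hG
    rw [hY]
    exact C1_at hkn hw0 hw hσ hG n k M l hn hk hM hl
  have hX : (n+k)/n/(2*k+1)*M ≤ 3/(2*k+1)*M := by
    have : (n+k)/n ≤ 3 := by rw [div_le_iff₀ hn0]; linarith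
    gcongr
  have hC2 : ∀ G : ℕ → ℝ → ℝ, WChain (N+1) σ G → |G (j+1) w| ≤ 3/(2*k+1)*M + 2*Y := by
    intro G hG
    have := hC1 G hG
    linarith
  rcases Nat.eq_zero_or_pos j with hj | hj
  · -- scaling argument for `k = 1`
    have hs0 : 0 < (1+x)/(1+w) := by positivity
    have hs1 : (1+x)/(1+w) ≤ 1 := by rw [div_le_one (by linarith)]; linarith
    have hs2 : 1/2 ≤ (1+x)/(1+w) := by rw [div_le_div_iff₀ (by norm_num) (by linarith)]; linarith
    have hG := hC1 _ (hF.comp_affine ((1+x)/(1+w)) ((1+x)/(1+w) - 1) hs0.ne' (by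
      rw [abs_of_pos hs0, abs_of_nonpos (by linarith)]; linarith))
    have ex : (1+x)/(1+w)*w + ((1+x)/(1+w) - 1) = x := by
      have : 1 + w ≠ 0 := by linarith
      field_simp
      ring
    have hk' : k = 1 := by rw [hk, hj]; norm_num
    have hX2 : 2*((n+k)/n/(2*k+1)*M) ≤ 3/(2*k+1)*M := by
      have : 2*((n+k)/n) ≤ 3 := by
        rw [mul_div_assoc', div_le_iff₀ hn0]; linarith
      have h2 := mul_le_mul_of_nonneg_right this (show 0 ≤ M/(2*k+1) by positivity)
      calc _ = 2*((n+k)/n)*(M/(2*k+1)) := by ring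
        _ ≤ 3*(M/(2*k+1)) := h2
        _ = _ := by ring
    rw [eY]
    subst hj
    simp only [zero_add, pow_one, ex, abs_mul, abs_of_pos hs0] at hG ⊢
    have := mul_le_mul_of_nonneg_right hs2 (abs_nonneg (F 1 x))
    linarith
  · rcases Nat.lt_or_ge N (j+3) with hN | hN
    · have : w = 0 := I0 (by omega)
      have : x = w := by linarith
      rw [this, eY]
      exact hC2 F hF
    · -- maximum over `[-w,w]`
      have hsub : Icc (-w) w ⊆ Icc (-1:ℝ) 1 := Icc_subset_Icc (by linarith) hw1.le
      have hcont : ContinuousOn (fun t => |F (j+1) t|) (Icc (-w) w) :=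
        ((hF.1 (j+1) (by omega)).1.mono hsub).abs
      obtain ⟨y, hyI, hy⟩ := isCompact_Icc.exists_isMaxOn ⟨0, by constructor <;> linarith⟩ hcont
      have hxy : |F (j+1) x| ≤ |F (j+1) y| := hy ⟨by linarith, hxw⟩
      have hR := hF.comp_affine (-1) 0 (by norm_num) (by norm_num)
      have hR1 : ∀ t, |(-1:ℝ)^(j+1) * F (j+1) (-1 * t + 0)| = |F (j+1) (-t)| := by
        intro t
        rw [abs_mul, abs_pow, abs_neg, abs_one, one_pow, one_mul]
        congr 2; ring
      refine hxy.trans ?_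
      rcases eq_or_lt_of_le hyI.1 with h1 | h1
      · have := hC2 _ hR
        simp only [hR1] at this
        rw [eY, ← h1]
        exact this
      rcases eq_or_lt_of_le hyI.2 with h2 | h2
      · rw [eY, h2]; exact hC2 F hF
      by_cases h0 : F (j+1) y = 0
      · rw [h0, abs_zero]; rw [eY]; positivity
      have hyI' : y ∈ Ioo (-1:ℝ) 1 := ⟨by linarith, by linarith⟩
      have hd : F (j+2) y = 0 := by
        have hD := ((hF.1 (j+1) (by omega)).2 y hyI').pow 2
        have hloc : IsLocalMax (F (j+1) ^ 2) y := by
          filter_upwards [Icc_mem_nhds h1 h2] with t ht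
          have := hy ht
          exact sq_le_sq.2 this
        have := hloc.hasDerivAt_eq_zero hD
        simpa [h0] using this
      rcases le_total 0 y with hy0 | hy0
      · exact crit_bound hj hN hw0 hw hσ hF n k M l hn hk hM hl hy0 h2.le hd
      · have := crit_bound hj hN hw0 hw hσ hR n k M l hn hk hM hl (x := -y) (by linarith) (by linarith) (by
          simp [hd])
        simp only [hR1, neg_neg] at this
        exact this


/-- upper bound for `m_k(x,σ)` on `[0, ω_k]` via Lagrange interpolation. -/
theorem mval_upper_bound_interior (n k : ℕ) (σ : ℝ) (hn : 2 ≤ n) (hk1 : 1 ≤ k)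
    (hk2 : k ≤ n - 1) (hσ : 0 ≤ σ)
    (ωk : ℝ) (hω : IsGreatest {x : ℝ | chebDeriv n (k+1) x = 0} ωk) :
    ∀ x ∈ Icc (0:ℝ) ωk,
      mval n k x σ ≤
        (3 / (2 * (k:ℝ) + 1)) * chebDeriv ((n:ℤ) - 1) k 1 +
        (2 / (2 * (k:ℝ) + 1)) * (2 * ((k:ℝ) + 1) / ((n:ℝ) + (k:ℝ))) * chebDeriv n k 1 *
          (σ / sigmaN n) := by
  intro x hx
  obtain ⟨N, rfl⟩ : ∃ N, n = N + 1 := ⟨n - 1, by omega⟩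
  obtain ⟨j, rfl⟩ : ∃ j, k = j + 1 := ⟨k - 1, by omega⟩
  have hw : IsGreatest {x : ℝ | dv (Chebyshev.T ℝ ((N+1:ℕ):ℤ)) (j+2) x = 0} ωk := hω
  rcases Nat.lt_or_ge N (j+2) with hN | hN
  · obtain rfl : N = j + 1 := by omega
    exact absurd hw.1 (cheb_top_pos (j+1+1) ωk).ne'
  have e1 : chebDeriv (((N+1:ℕ):ℤ) - 1) (j+1) 1 = dv (Chebyshev.T ℝ (N:ℤ)) (j+1) 1 := by
    rw [show (((N+1:ℕ):ℤ) - 1) = (N:ℤ) by push_cast; ring]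
    rfl
  have e2 : chebDeriv ((N+1:ℕ):ℤ) (j+1) 1 = dv (Chebyshev.T ℝ ((N+1:ℕ):ℤ)) (j+1) 1 := rfl
  have hr := cheb_M_ratio N (j+1) (by omega)
  rw [e1, e2]
  have hN' : (j:ℝ) + 2 ≤ N := by exact_mod_cast hN
  have hj0 : (0:ℝ) ≤ j := Nat.cast_nonneg _
  have p0 : (0:ℝ) < N := by linarith
  have p1 : (0:ℝ) < (N:ℝ) + 1 - (j+1) := by linarith
  have hM0 := cheb_one_pos N (j+1) (by omega)
  have hM1 := cheb_one_pos (N+1) (j+1) (by omega)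
  have hτ : 0 ≤ σ / sigmaN (N+1) := div_nonneg hσ (sigmaN_pos _).le
  apply Real.sSup_le
  · rintro y ⟨f, hf, rfl⟩
    have := main_bound hN hw hσ (WChain_of_memW hf) N (j+1) _ _ rfl rfl rfl rfl hx.1 hx.2
    refine this.trans (le_of_eq ?_)
    have hr' : dv (Chebyshev.T ℝ ((N+1:ℕ):ℤ)) (j+1) 1 = dv (Chebyshev.T ℝ (N:ℤ)) (j+1) 1 * (((N:ℝ)+1) * (N + (j+1)))/((N:ℝ) * (N + 1 - (j+1))) := by
      rw [eq_div_iff (by positivity)]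
      push_cast at hr ⊢
      exact hr
    rw [hr']
    push_cast
    have q1 : (N:ℝ) + (j+1) + 1 ≠ 0 := by positivity
    have q2 : (N:ℝ) + 1 + (j+1) ≠ 0 := by positivity
    have q3 : (N:ℝ) + 1 + (j+1) = N + (j+1) + 1 := by ring
    rw [q3]
    congr 1
    field_simp
  · positivity
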